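/- Let Γ be a simplicial graph obtained from a single vertex by finitely many operations of the following two types: (i) attach a new 1-simplex or a new 2-simplex to the previously constructed graph Γ₀ by identifying exactly one of its vertices with a vertex of Γ₀; (ii) attach a new 2-simplex to Γ₀ by identifying exactly one of its 1-simplices with a 1-simplex of Γ₀. Then the right-angled Artin group π defined by Γ has tame cohomology: Hom_Λ(H²(π; Λ), Λ) = 0, Hom_Λ(H³(π; Λ), Λ) = 0, and Ext¹_Λ(H³(π; Λ), Λ) = 0. -/

import Mathlib

open Finset

/-- The integral group ring `ℤ[π]`. -/
abbrev GroupRing (π : Type) [Group π] : Type := MonoidAlgebra ℤ π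

variable (π : Type) [Group π]

/-- The differential of the inhomogeneous cochain complex computing the group cohomology
`H^*(π; M)` of a left `ℤ[π]`-module `M`. -/
noncomputable def cochainD (M : Type) [AddCommGroup M] [Module (GroupRing π) M] (n : ℕ) :
    ((Fin n → π) → M) →+ ((Fin (n + 1) → π) → M) where
  toFun f g := (MonoidAlgebra.single (g 0) (1 : ℤ)) • f (fun i => g i.succ)
      + ∑ j : Fin (n + 1), ((-1 : ℤ) ^ ((j : ℕ) + 1)) • f (Fin.contractNth j (· * ·) g)
  map_zero' := by
    funext g; simp
  map_add' f₁ f₂ := by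
    funext g
    simp only [Pi.add_apply, smul_add, Finset.sum_add_distrib]
    abel

/-- Inhomogeneous `n`-cocycles. -/
noncomputable def cocyclesGen (M : Type) [AddCommGroup M] [Module (GroupRing π) M] (n : ℕ) :
    AddSubgroup ((Fin n → π) → M) :=
  (cochainD π M n).ker

/-- Inhomogeneous `n`-coboundaries. -/
noncomputable def coboundariesGen (M : Type) [AddCommGroup M] [Module (GroupRing π) M] :
    (n : ℕ) → AddSubgroup ((Fin n → π) → M)
  | 0 => ⊥
  | (n + 1) => (cochainD π M n).range

/-- The group cohomology `H^n(π; M)`, as an abelian group. -/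
noncomputable def groupCoh (M : Type) [AddCommGroup M] [Module (GroupRing π) M] (n : ℕ) : Type :=
  (cocyclesGen π M n) ⧸ ((coboundariesGen π M n).addSubgroupOf (cocyclesGen π M n))

noncomputable instance (M : Type) [AddCommGroup M] [Module (GroupRing π) M] (n : ℕ) :
    AddCommGroup (groupCoh π M n) := by
  unfold groupCoh; infer_instance

/-- `cd π ≤ n` : the cohomological dimension of `π` is at most `n`, i.e. `H^i(π; M) = 0`
for all `i > n` and all `ℤ[π]`-modules `M`. -/
def cdLE (n : ℕ) : Prop :=
  ∀ (M : Type) (_ : AddCommGroup M) (_ : Module (GroupRing π) M) (i : ℕ), n < i →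
    Subsingleton (groupCoh π M i)

/-- `π` is a finitely presented group. -/
def IsFinitelyPresented : Prop :=
  ∃ (m : ℕ) (rels : Finset (FreeGroup (Fin m))),
    Nonempty (PresentedGroup (rels : Set (FreeGroup (Fin m))) ≃* π)

/-- The cochain differential with group ring coefficients is right `ℤ[π]`-linear
(where right modules are left modules over the opposite ring). -/
noncomputable def cochainDOp (n : ℕ) :
    ((Fin n → π) → GroupRing π) →ₗ[(GroupRing π)ᵐᵒᵖ] ((Fin (n + 1) → π) → GroupRing π) where
  toFun := cochainD π (GroupRing π) n
  map_add' := (cochainD π (GroupRing π) n).map_add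
  map_smul' a f := by
    funext g
    simp only [cochainD, AddMonoidHom.coe_mk, ZeroHom.coe_mk, Pi.smul_apply,
      MulOpposite.smul_eq_mul_unop, smul_eq_mul, RingHom.id_apply]
    rw [add_mul, Finset.sum_mul, ← mul_assoc]
    congr 1
    refine Finset.sum_congr rfl fun j _ => ?_
    rw [smul_mul_assoc]

/-- Cocycles with group ring coefficients, as a right `ℤ[π]`-submodule. -/
noncomputable def cocyclesΛ (n : ℕ) :
    Submodule (GroupRing π)ᵐᵒᵖ ((Fin n → π) → GroupRing π) :=
  LinearMap.ker (cochainDOp π n)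

/-- Coboundaries with group ring coefficients, as a right `ℤ[π]`-submodule. -/
noncomputable def coboundariesΛ :
    (n : ℕ) → Submodule (GroupRing π)ᵐᵒᵖ ((Fin n → π) → GroupRing π)
  | 0 => ⊥
  | (n + 1) => LinearMap.range (cochainDOp π n)

/-- The group cohomology `H^n(π; ℤ[π])` with group ring coefficients,
as a right `ℤ[π]`-module. -/
noncomputable def groupCohΛ (n : ℕ) : Type :=
  (cocyclesΛ π n) ⧸ ((coboundariesΛ π n).comap (cocyclesΛ π n).subtype)

noncomputable instance (n : ℕ) : AddCommGroup (groupCohΛ π n) := by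
  unfold groupCohΛ; infer_instance

noncomputable instance (n : ℕ) : Module (GroupRing π)ᵐᵒᵖ (groupCohΛ π n) := by
  unfold groupCohΛ; infer_instance

open CategoryTheory in
/-- `Ext^n` of (left) `S`-modules, as an abelian group: the value of Mathlib's
`Ext`-functor on the category of `S`-modules. -/
noncomputable def extGroup (S : Type) [Ring S] (A B : Type) [AddCommGroup A] [AddCommGroup B]
    [Module S A] [Module S B] (n : ℕ) : Type :=
  ((Ext ℤ (ModuleCat.{0} S) n).obj (Opposite.op (ModuleCat.of S A))).obj (ModuleCat.of S B)

noncomputable instance (S : Type) [Ring S] (A B : Type) [AddCommGroup A] [AddCommGroup B]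
    [Module S A] [Module S B] (n : ℕ) : AddCommGroup (extGroup S A B n) := by
  unfold extGroup; infer_instance

/-- The commutator relations defining a right-angled Artin group: one commutator
`[v, w] = v w v⁻¹ w⁻¹` for each edge `{v, w}` of the defining graph. -/
def raagRels (V : Type) (Γ : SimpleGraph V) : Set (FreeGroup V) :=
  {r | ∃ v w : V, Γ.Adj v w ∧
    r = FreeGroup.of v * FreeGroup.of w * (FreeGroup.of v)⁻¹ * (FreeGroup.of w)⁻¹}

/-- The right-angled Artin group defined by the simplicial graph `Γ`. -/
def RAAGroup (V : Type) (Γ : SimpleGraph V) : Type := PresentedGroup (raagRels V Γ)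

instance (V : Type) (Γ : SimpleGraph V) : Group (RAAGroup V Γ) :=
  inferInstanceAs (Group (PresentedGroup (raagRels V Γ)))

/-- The generator of a right-angled Artin group corresponding to a vertex. -/
def RAAGroup.of {V : Type} {Γ : SimpleGraph V} (v : V) : RAAGroup V Γ :=
  PresentedGroup.of v

/-- Simplicial graphs (with vertex set a finite subset of `ℕ`) obtained from a single vertex
by finitely many operations of: (i) attaching a new 1-simplex or 2-simplex by identifying
exactly one of its vertices with an existing vertex; (ii) attaching a new 2-simplex by
identifying exactly one of its 1-simplices with an existing 1-simplex. -/
inductive BuiltGraph : Finset ℕ → SimpleGraph ℕ → Prop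
  | single (v : ℕ) : BuiltGraph {v} ⊥
  | attachEdgeAtVertex (S : Finset ℕ) (Γ : SimpleGraph ℕ) (hS : BuiltGraph S Γ)
      (a b : ℕ) (ha : a ∈ S) (hb : b ∉ S) :
      BuiltGraph (insert b S) (Γ ⊔ SimpleGraph.fromEdgeSet {s(a, b)})
  | attachTriangleAtVertex (S : Finset ℕ) (Γ : SimpleGraph ℕ) (hS : BuiltGraph S Γ)
      (a b c : ℕ) (ha : a ∈ S) (hb : b ∉ S) (hc : c ∉ S) (hbc : b ≠ c) :
      BuiltGraph (insert b (insert c S))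
        (Γ ⊔ SimpleGraph.fromEdgeSet {s(a, b), s(a, c), s(b, c)})
  | attachTriangleAtEdge (S : Finset ℕ) (Γ : SimpleGraph ℕ) (hS : BuiltGraph S Γ)
      (a b c : ℕ) (ha : a ∈ S) (hb : b ∈ S) (hab : Γ.Adj a b) (hc : c ∉ S) :
      BuiltGraph (insert c S) (Γ ⊔ SimpleGraph.fromEdgeSet {s(a, c), s(b, c)})

section Regularity

variable {π}

/-- The element `g - 1` of the group ring. -/
noncomputable def subOne (g : π) : GroupRing π := MonoidAlgebra.single g 1 - 1

/-- The component of degree `n` of an element of the group ring, for the grading defined by a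
homomorphism to the integers. -/
noncomputable def gradedPart (χ : π →* Multiplicative ℤ) (n : ℤ) :
    GroupRing π →+ GroupRing π :=
  (MonoidAlgebra.coeffAddEquiv.symm.toAddMonoidHom.comp
    (Finsupp.filterAddHom fun g => χ g = Multiplicative.ofAdd n)).comp
    MonoidAlgebra.coeffAddEquiv.toAddMonoidHom

lemma gradedPart_single (χ : π →* Multiplicative ℤ) (n : ℤ) (g : π) (c : ℤ)
    [Decidable (χ g = Multiplicative.ofAdd n)] :
    gradedPart χ n (MonoidAlgebra.single g c) =
      if χ g = Multiplicative.ofAdd n then MonoidAlgebra.single g c else 0 := by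
  split_ifs with h <;>
  · ext1
    simp [gradedPart, h, Finsupp.filterAddHom]

lemma exists_gradedPart_eq_zero (χ : π →* Multiplicative ℤ) (x : GroupRing π) :
    ∃ N : ℤ, ∀ n < N, gradedPart χ n x = 0 := by
  induction x using MonoidAlgebra.induction_linear with
  | zero => exact ⟨0, fun n _ => map_zero _⟩
  | add f g hf hg =>
    obtain ⟨N, hN⟩ := hf
    obtain ⟨M, hM⟩ := hg
    exact ⟨min N M, fun n hn => by
      rw [map_add, hN n (hn.trans_le (min_le_left _ _)), hM n (hn.trans_le (min_le_right _ _)),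
        add_zero]⟩
  | single g c =>
    classical
    refine ⟨(χ g).toAdd, fun n hn => ?_⟩
    rw [gradedPart_single, if_neg]
    rintro h
    rw [h] at hn
    exact lt_irrefl _ hn

lemma mem_of_gradedPart_mem (χ : π →* Multiplicative ℤ) (I : AddSubgroup (GroupRing π))
    (x : GroupRing π) (h : ∀ n, gradedPart χ n x ∈ I) : x ∈ I := by
  classical
  have key : ∃ s : Finset ℤ, ∑ n ∈ s, gradedPart χ n x = x ∧ ∀ n ∉ s, gradedPart χ n x = 0 := by
    clear h
    induction x using MonoidAlgebra.induction_linear with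
    | zero => exact ⟨∅, by simp⟩
    | add f g hf hg =>
      obtain ⟨s, hs, hs'⟩ := hf
      obtain ⟨t, ht, ht'⟩ := hg
      refine ⟨s ∪ t, ?_, fun n hn => ?_⟩
      · simp only [map_add, Finset.sum_add_distrib]
        congr 1
        · rw [← Finset.sum_subset Finset.subset_union_left fun n _ hn => hs' n hn, hs]
        · rw [← Finset.sum_subset Finset.subset_union_right fun n _ hn => ht' n hn, ht]
      · rw [Finset.mem_union, not_or] at hn
        rw [map_add, hs' n hn.1, ht' n hn.2, add_zero]
    | single g c =>
      refine ⟨{(χ g).toAdd}, ?_, fun n hn => ?_⟩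
      · rw [Finset.sum_singleton, gradedPart_single, if_pos (ofAdd_toAdd _).symm]
      · rw [gradedPart_single, if_neg]
        rintro h
        exact hn (by simp [h])
  obtain ⟨s, hs, -⟩ := key
  exact hs ▸ I.sum_mem fun n _ => h n

/-- An additive operator on the group ring is homogeneous of degree `k`. -/
def IsHomogeneousOp (χ : π →* Multiplicative ℤ) (k : ℤ) (T : GroupRing π →+ GroupRing π) : Prop :=
  ∀ n x, gradedPart χ (n + k) (T x) = T (gradedPart χ n x)

lemma isHomogeneousOp_mulLeft (χ : π →* Multiplicative ℤ) (k : ℤ) (g : π)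
    (hg : χ g = Multiplicative.ofAdd k) :
    IsHomogeneousOp χ k (AddMonoidHom.mulLeft (MonoidAlgebra.single g 1)) := by
  classical
  intro n x
  induction x using MonoidAlgebra.induction_linear with
  | zero => simp
  | add f g hf hg => simp only [map_add, hf, hg]
  | single h c =>
    have : χ (g * h) = Multiplicative.ofAdd (n + k) ↔ χ h = Multiplicative.ofAdd n := by
      rw [map_mul, hg, add_comm, ofAdd_add, mul_right_inj]
    simp only [AddMonoidHom.coe_mulLeft, MonoidAlgebra.single_mul_single, gradedPart_single, this]
    split_ifs <;> simp [MonoidAlgebra.single_mul_single]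

lemma isHomogeneousOp_mulRight (χ : π →* Multiplicative ℤ) (k : ℤ) (g : π)
    (hg : χ g = Multiplicative.ofAdd k) :
    IsHomogeneousOp χ k (AddMonoidHom.mulRight (MonoidAlgebra.single g 1)) := by
  classical
  intro n x
  induction x using MonoidAlgebra.induction_linear with
  | zero => simp
  | add f g hf hg => simp only [map_add, hf, hg]
  | single h c =>
    have : χ (h * g) = Multiplicative.ofAdd (n + k) ↔ χ h = Multiplicative.ofAdd n := by
      rw [map_mul, hg, ofAdd_add, mul_left_inj]
    simp only [AddMonoidHom.mulRight_apply, MonoidAlgebra.single_mul_single, gradedPart_single,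
      this]
    split_ifs <;> simp [MonoidAlgebra.single_mul_single]

/-- `T - 1` is injective modulo a graded subgroup, for `T` an operator of degree one. -/
lemma mem_of_sub_self_mem {χ : π →* Multiplicative ℤ} {T : GroupRing π →+ GroupRing π}
    (hT : IsHomogeneousOp χ 1 T) (I : AddSubgroup (GroupRing π)) (hTI : ∀ x ∈ I, T x ∈ I)
    (hI : ∀ n, ∀ x ∈ I, gradedPart χ n x ∈ I) (x : GroupRing π) (hx : T x - x ∈ I) : x ∈ I := by
  refine mem_of_gradedPart_mem χ I x fun n => ?_
  obtain ⟨N, hN⟩ := exists_gradedPart_eq_zero χ x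
  rcases lt_or_ge n N with h | h
  · rw [hN n h]
    exact I.zero_mem
  have step : ∀ m, gradedPart χ m x ∈ I → gradedPart χ (m + 1) x ∈ I := by
    intro m hm
    have h₁ := hI (m + 1) _ hx
    rw [map_sub, hT m x] at h₁
    simpa using I.sub_mem (hTI _ hm) h₁
  have hN' : gradedPart χ N x ∈ I := by
    have := step (N - 1) (by rw [hN _ (by omega)]; exact I.zero_mem)
    simpa using this
  induction n, h using Int.leInduction with
  | base => exact hN'
  | succ m _ ih => exact step m ih

lemma eq_zero_of_apply_eq_self {χ : π →* Multiplicative ℤ} {T : GroupRing π →+ GroupRing π}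
    (hT : IsHomogeneousOp χ 1 T) {x : GroupRing π} (hx : T x - x = 0) : x = 0 := by
  refine (AddSubgroup.mem_bot).1
    (mem_of_sub_self_mem hT ⊥ ?_ ?_ x (AddSubgroup.mem_bot.2 hx)) <;> simp

lemma IsHomogeneousOp.gradedPart_sub {χ : π →* Multiplicative ℤ}
    {T : GroupRing π →+ GroupRing π} (hT : IsHomogeneousOp χ 0 T) (n : ℤ) (x : GroupRing π) :
    gradedPart χ n (T x - x) = T (gradedPart χ n x) - gradedPart χ n x := by
  have := hT n x
  rw [add_zero] at this
  rw [map_sub, this]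

/-- Exactness of the two-variable Koszul complex of commuting operators. -/
lemma exists_of_sub_self_eq_sub_self {χ ω : π →* Multiplicative ℤ}
    {T U : GroupRing π →+ GroupRing π} (hT : IsHomogeneousOp χ 1 T) (hU : IsHomogeneousOp ω 1 U)
    (hTU : IsHomogeneousOp ω 0 T) (hcomm : ∀ x, T (U x) = U (T x)) {x y : GroupRing π}
    (h : U x - x = T y - y) : ∃ t, x = T t - t ∧ y = U t - t := by
  obtain ⟨t, rfl⟩ : x ∈ (T - AddMonoidHom.id _).range := by
    refine mem_of_sub_self_mem hU _ ?_ ?_ x ⟨y, h.symm⟩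
    · rintro _ ⟨z, rfl⟩
      exact ⟨U z, by simp [hcomm]⟩
    · rintro n _ ⟨z, rfl⟩
      exact ⟨gradedPart ω n z, (hTU.gradedPart_sub n z).symm⟩
  simp only [AddMonoidHom.sub_apply, AddMonoidHom.id_apply] at h ⊢
  refine ⟨t, rfl, ?_⟩
  refine sub_eq_zero.1 (eq_zero_of_apply_eq_self hT ?_)
  rw [map_sub, map_sub, hcomm]
  rw [map_sub] at h
  rw [sub_sub_sub_comm, ← h]
  abel

lemma eq_zero_of_mul_subOne_eq_zero {χ : π →* Multiplicative ℤ} {a : π}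
    (ha : χ a = Multiplicative.ofAdd 1) {x : GroupRing π} (hx : x * subOne a = 0) : x = 0 :=
  eq_zero_of_apply_eq_self (isHomogeneousOp_mulRight χ 1 a ha) (by simpa [subOne, mul_sub] using hx)

lemma subOne_commute {a b : π} (h : Commute a b) : Commute (subOne a) (subOne b) := by
  have : Commute (MonoidAlgebra.single a (1 : ℤ)) (MonoidAlgebra.single b 1) := by
    simp [Commute, SemiconjBy, MonoidAlgebra.single_mul_single, h.eq]
  exact ((this.sub_left (Commute.one_left _)).sub_right (Commute.one_right _))

lemma exists_of_mul_subOne_eq {χ ω : π →* Multiplicative ℤ} {a b : π} (hab : Commute a b)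
    (ha : χ a = Multiplicative.ofAdd 1) (hb : ω b = Multiplicative.ofAdd 1) (hωa : ω a = 1)
    {x y : GroupRing π} (h : x * subOne b = y * subOne a) :
    ∃ t, x = t * subOne a ∧ y = t * subOne b := by
  obtain ⟨t, hx, hy⟩ := exists_of_sub_self_eq_sub_self (isHomogeneousOp_mulRight χ 1 a ha)
    (isHomogeneousOp_mulRight ω 1 b hb) (isHomogeneousOp_mulRight ω 0 a hωa)
    (fun x => by simp [mul_assoc, MonoidAlgebra.single_mul_single, hab.eq])
    (x := x) (y := y) (by simpa [subOne, mul_sub] using h)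
  exact ⟨t, by simpa [subOne, mul_sub] using hx, by simpa [subOne, mul_sub] using hy⟩

lemma exists_of_subOne_mul_eq {χ ω : π →* Multiplicative ℤ} {a b : π} (hab : Commute a b)
    (ha : χ a = Multiplicative.ofAdd 1) (hb : ω b = Multiplicative.ofAdd 1) (hωa : ω a = 1)
    {x y : GroupRing π} (h : subOne b * x = subOne a * y) :
    ∃ t, x = subOne a * t ∧ y = subOne b * t := by
  obtain ⟨t, hx, hy⟩ := exists_of_sub_self_eq_sub_self (isHomogeneousOp_mulLeft χ 1 a ha)
    (isHomogeneousOp_mulLeft ω 1 b hb) (isHomogeneousOp_mulLeft ω 0 a hωa)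
    (fun x => by simp [← mul_assoc, MonoidAlgebra.single_mul_single, hab.eq])
    (x := x) (y := y) (by simpa [subOne, sub_mul] using h)
  exact ⟨t, by simpa [subOne, sub_mul] using hx, by simpa [subOne, sub_mul] using hy⟩

/-- The right ideal of the group ring generated by `a - 1` and `b - 1`. -/
def subOneIdeal (a b : π) : AddSubgroup (GroupRing π) where
  carrier := {x | ∃ r s, x = subOne a * r + subOne b * s}
  zero_mem' := ⟨0, 0, by simp⟩
  add_mem' := by
    rintro _ _ ⟨r, s, rfl⟩ ⟨r', s', rfl⟩
    exact ⟨r + r', s + s', by simp only [mul_add]; abel⟩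
  neg_mem' := by
    rintro _ ⟨r, s, rfl⟩
    exact ⟨-r, -s, by simp only [mul_neg]; abel⟩

lemma mem_subOneIdeal_of_subOne_mul_mem {χ : π →* Multiplicative ℤ} {a b c : π}
    (hac : Commute a c) (hbc : Commute b c) (ha : χ a = 1) (hb : χ b = 1)
    (hc : χ c = Multiplicative.ofAdd 1) {x : GroupRing π} (h : subOne c * x ∈ subOneIdeal a b) :
    x ∈ subOneIdeal a b := by
  have hgr : ∀ g : π, χ g = 1 → ∀ n z,
      gradedPart χ n (subOne g * z) = subOne g * gradedPart χ n z := fun g hg n z => by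
    simpa [subOne, sub_mul] using (isHomogeneousOp_mulLeft χ 0 g hg).gradedPart_sub n z
  have hcomm : ∀ g : π, Commute g c → ∀ z : GroupRing π,
      MonoidAlgebra.single c 1 * (subOne g * z) = subOne g * (MonoidAlgebra.single c 1 * z) :=
    fun g hg z => by
      simp [subOne, sub_mul, mul_sub, ← mul_assoc, MonoidAlgebra.single_mul_single, hg.eq]
  refine mem_of_sub_self_mem (isHomogeneousOp_mulLeft χ 1 c hc) _ ?_ ?_ x
    (by simpa [subOne, sub_mul] using h)
  · rintro _ ⟨r, s, rfl⟩
    exact ⟨_, _, by rw [AddMonoidHom.coe_mulLeft, mul_add, hcomm a hac, hcomm b hbc]⟩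
  · rintro n _ ⟨r, s, rfl⟩
    exact ⟨_, _, by rw [map_add, hgr a ha, hgr b hb]⟩

end Regularity

section Bar

/-- The free left `ℤ[π]`-module in degree `n` of the bar resolution. -/
abbrev BarModule (n : ℕ) : Type := (Fin n → π) →₀ GroupRing π

/-- The differential of the bar resolution. -/
noncomputable def barD (n : ℕ) : BarModule π (n + 1) →ₗ[GroupRing π] BarModule π n :=
  Finsupp.linearCombination (GroupRing π)
    (cochainD π (BarModule π n) n fun g => Finsupp.single g 1)

variable {π}

lemma barD_single_one (n : ℕ) (g : Fin (n + 1) → π) :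
    barD π n (Finsupp.single g 1) =
      cochainD π (BarModule π n) n (fun g => Finsupp.single g 1) g := by
  simp [barD]

lemma cochainD_map {M N : Type} [AddCommGroup M] [AddCommGroup N] [Module (GroupRing π) M]
    [Module (GroupRing π) N] (n : ℕ) (L : M →ₗ[GroupRing π] N) (f : (Fin n → π) → M)
    (g : Fin (n + 1) → π) :
    cochainD π N n (fun h => L (f h)) g = L (cochainD π M n f g) := by
  simp [cochainD]

lemma cochainD_eq {M : Type} [AddCommGroup M] [Module (GroupRing π) M] (n : ℕ)
    (L : BarModule π n →ₗ[GroupRing π] M) (g : Fin (n + 1) → π) :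
    cochainD π M n (fun h => L (Finsupp.single h 1)) g = L (barD π n (Finsupp.single g 1)) := by
  rw [cochainD_map, barD_single_one]

/-- The contracting homotopy of the bar resolution. -/
noncomputable def barContraction (n : ℕ) : BarModule π n →+ BarModule π (n + 1) :=
  Finsupp.liftAddHom fun g =>
    (Finsupp.liftAddHom fun h : π =>
      (zmultiplesHom _ (Finsupp.single (Fin.cons h g : Fin (n + 1) → π) (1 : GroupRing π)))).comp
      MonoidAlgebra.coeffAddEquiv.toAddMonoidHom

lemma barContraction_single (n : ℕ) (g : Fin n → π) (h : π) (c : ℤ) :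
    barContraction n (Finsupp.single g (MonoidAlgebra.single h c)) =
      c • Finsupp.single (Fin.cons h g : Fin (n + 1) → π) (1 : GroupRing π) := by
  simp [barContraction]

lemma BarModule.addHom_ext {n : ℕ} {N : Type*} [AddCommGroup N] {f g : BarModule π n →+ N}
    (h : ∀ u : Fin n → π, ∀ a : π, f (Finsupp.single u (MonoidAlgebra.single a 1)) =
      g (Finsupp.single u (MonoidAlgebra.single a 1))) : f = g := by
  refine Finsupp.addHom_ext fun u x => ?_
  induction x using MonoidAlgebra.induction_linear with
  | zero => simp
  | add x y hx hy => rw [Finsupp.single_add, map_add, map_add, hx, hy]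
  | single a c =>
    have : (Finsupp.single u (MonoidAlgebra.single a c) : BarModule π n) =
        c • Finsupp.single u (MonoidAlgebra.single a 1) := by
      rw [Finsupp.smul_single, MonoidAlgebra.smul_single, smul_eq_mul, mul_one]
    rw [this, map_zsmul, map_zsmul, h]

lemma barD_single (n : ℕ) (g : Fin (n + 1) → π) (a : π) :
    barD π n (Finsupp.single g (MonoidAlgebra.single a 1)) =
      Finsupp.single (fun i => g i.succ) (MonoidAlgebra.single (a * g 0) 1)
      + ∑ j : Fin (n + 1), ((-1 : ℤ) ^ ((j : ℕ) + 1)) •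
        Finsupp.single (Fin.contractNth j (· * ·) g) (MonoidAlgebra.single a 1) := by
  have h : (Finsupp.single g (MonoidAlgebra.single a 1) : BarModule π (n + 1)) =
      MonoidAlgebra.single a (1 : ℤ) • Finsupp.single g 1 := by
    rw [Finsupp.smul_single, smul_eq_mul, mul_one]
  rw [h, map_smul, barD_single_one]
  simp only [cochainD, AddMonoidHom.coe_mk, ZeroHom.coe_mk, smul_add, Finset.smul_sum,
    smul_comm (MonoidAlgebra.single a (1 : ℤ)) (_ : ℤ), Finsupp.smul_single (_ : GroupRing π),
    smul_eq_mul, mul_one, MonoidAlgebra.single_mul_single]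

lemma contractNth_succ_cons (n : ℕ) (j : Fin (n + 1)) (a : π) (g : Fin (n + 1) → π) :
    Fin.contractNth j.succ (· * ·) (Fin.cons a g : Fin (n + 2) → π) =
      (Fin.cons a (Fin.contractNth j (· * ·) g) : Fin (n + 1) → π) := by
  funext k
  refine Fin.cases ?_ (fun k => ?_) k
  · simp [Fin.contractNth]
  · simp [Fin.contractNth]

lemma contractNth_zero_cons (n : ℕ) (a : π) (g : Fin (n + 1) → π) :
    Fin.contractNth 0 (· * ·) (Fin.cons a g : Fin (n + 2) → π) =
      (Fin.cons (a * g 0) (fun i => g i.succ) : Fin (n + 1) → π) := by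
  funext k
  refine Fin.cases ?_ (fun k => ?_) k
  · simp [Fin.contractNth]
  · simp [Fin.contractNth]

lemma barD_barContraction (n : ℕ) (x : BarModule π (n + 1)) :
    barD π (n + 1) (barContraction (n + 1) x) + barContraction n (barD π n x) = x := by
  have : ((barD π (n + 1)).toAddMonoidHom.comp (barContraction (n + 1)) +
      (barContraction n).comp (barD π n).toAddMonoidHom) = AddMonoidHom.id _ := by
    refine BarModule.addHom_ext fun g a => ?_
    simp only [AddMonoidHom.add_apply, AddMonoidHom.comp_apply, LinearMap.toAddMonoidHom_coe,
      barContraction_single, barD_single, AddMonoidHom.id_apply, one_smul, map_add, map_sum,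
      map_zsmul, MonoidAlgebra.one_def, one_mul]
    rw [Fin.sum_univ_succ, contractNth_zero_cons]
    simp only [Fin.cons_zero, Fin.cons_succ, contractNth_succ_cons, pow_succ, Fin.val_succ,
      Fin.val_zero, pow_zero, mul_neg, mul_one, neg_smul, one_smul, neg_neg,
      Finset.sum_neg_distrib, ← MonoidAlgebra.one_def]
    abel
  exact DFunLike.congr_fun this x

lemma barD_comp_barD (n : ℕ) (x : BarModule π (n + 2)) : barD π n (barD π (n + 1) x) = 0 := by
  suffices h : (barD π n).comp (barD π (n + 1)) = 0 from LinearMap.congr_fun h x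
  clear x
  induction n with
  | zero =>
    refine Finsupp.lhom_ext' fun g => LinearMap.ext_ring ?_
    simp only [LinearMap.comp_apply, Finsupp.lsingle_apply, LinearMap.zero_apply,
      MonoidAlgebra.one_def, barD_single, map_add, map_sum, map_zsmul]
    simp [Fin.sum_univ_two, Subsingleton.elim _ (default : Fin 0 → π), Fin.contractNth]
    abel
  | succ n ih =>
    refine Finsupp.lhom_ext' fun g => LinearMap.ext_ring ?_
    have hg : (Finsupp.single g 1 : BarModule π (n + 3)) = barContraction (n + 2)
        (Finsupp.single (Fin.tail g) (MonoidAlgebra.single (g 0) 1)) := by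
      rw [barContraction_single, one_smul, Fin.cons_self_tail]
    simp only [LinearMap.comp_apply, Finsupp.lsingle_apply, LinearMap.zero_apply]
    rw [hg, eq_sub_of_add_eq (barD_barContraction (n + 1) _), map_sub,
      eq_sub_of_add_eq (barD_barContraction n _),
      show barD π n (barD π (n + 1) _) = 0 from LinearMap.congr_fun ih _]
    simp

lemma exists_barD_eq (n : ℕ) (x : BarModule π (n + 1)) (hx : barD π n x = 0) :
    ∃ y, barD π (n + 1) y = x :=
  ⟨barContraction (n + 1) x, by simpa [hx] using barD_barContraction n x⟩

end Bar

section ExtOne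

lemma exists_factor_of_ker_le {S : Type*} [Ring S] {X Y Z : Type*} [AddCommGroup X]
    [AddCommGroup Y] [AddCommGroup Z] [Module S X] [Module S Y] [Module S Z] (f : X →ₗ[S] Y)
    (hf : Function.Surjective f) (g : X →ₗ[S] Z) (h : ∀ x, f x = 0 → g x = 0) :
    ∃ k : Y →ₗ[S] Z, ∀ x, k (f x) = g x := by
  refine ⟨((LinearMap.ker f).liftQ g fun x hx => h x hx).comp
    (f.quotKerEquivOfSurjective hf).symm.toLinearMap, fun x => ?_⟩
  have : (f.quotKerEquivOfSurjective hf).symm (f x) = (LinearMap.ker f).mkQ x := by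
    rw [LinearEquiv.symm_apply_eq]
    rfl
  rw [LinearMap.comp_apply, LinearEquiv.coe_coe, this]
  exact Submodule.liftQ_apply _ _ _

/-- Maps out of the kernel of a presentation extend as soon as they do so for some presentation by
a projective module. -/
lemma exists_extension_of_presentation {S : Type} [Ring S] {A B P P' : Type} [AddCommGroup A]
    [AddCommGroup B] [AddCommGroup P] [AddCommGroup P'] [Module S A] [Module S B] [Module S P]
    [Module S P'] [Module.Projective S P] [Module.Projective S P'] (q : P →ₗ[S] A)
    (hq : Function.Surjective q) (q' : P' →ₗ[S] A) (hq' : Function.Surjective q')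
    (hext : ∀ G : LinearMap.ker q →ₗ[S] B, ∃ E : P →ₗ[S] B, ∀ k : LinearMap.ker q, E k = G k)
    (G : LinearMap.ker q' →ₗ[S] B) : ∃ E : P' →ₗ[S] B, ∀ k : LinearMap.ker q', E k = G k := by
  obtain ⟨α, hα⟩ := Module.projective_lifting_property q q' hq
  obtain ⟨β, hβ⟩ := Module.projective_lifting_property q' q hq'
  have hα' : ∀ x, q (α x) = q' x := LinearMap.congr_fun hα
  have hβ' : ∀ x, q' (β x) = q x := LinearMap.congr_fun hβ
  obtain ⟨E, hE⟩ := hext (G.comp ((β.comp (LinearMap.ker q).subtype).codRestrict _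
    fun k => by simp [hβ']))
  let γ : P' →ₗ[S] LinearMap.ker q' := (β.comp α - LinearMap.id).codRestrict _
    fun x => by simp [hβ', hα']
  refine ⟨E.comp α - G.comp γ, fun k => ?_⟩
  have h₁ : E (α k) = _ := hE ⟨α k, by simp [hα']⟩
  simp only [LinearMap.sub_apply, LinearMap.comp_apply, h₁]
  rw [← map_sub]
  congr 1
  exact Subtype.ext (sub_sub_cancel (β (α k)) (k : P'))

open CategoryTheory in
/-- `Ext¹(A, B)` vanishes if maps to `B` out of the kernel of a projective presentation of `A`
extend. -/
lemma subsingleton_extGroup_one {S : Type} [Ring S] {A B P : Type} [AddCommGroup A]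
    [AddCommGroup B] [AddCommGroup P] [Module S A] [Module S B] [Module S P]
    [Module.Projective S P] (q : P →ₗ[S] A) (hq : Function.Surjective q)
    (hext : ∀ G : LinearMap.ker q →ₗ[S] B, ∃ E : P →ₗ[S] B, ∀ k : LinearMap.ker q, E k = G k) :
    Subsingleton (extGroup S A B 1) := by
  let R := projectiveResolution (ModuleCat.of S A)
  suffices h : Limits.IsZero ((R.complex.linearYonedaObj ℤ (ModuleCat.of S B)).homology 1) from
    ModuleCat.subsingleton_of_isZero (h.of_iso (R.isoExt 1 (ModuleCat.of S B)))
  rw [← HomologicalComplex.exactAt_iff_isZero_homology,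
    HomologicalComplex.exactAt_iff' _ 0 1 2 (by simp) (by simp), ShortComplex.moduleCat_exact_iff]
  intro (x : R.complex.X 1 ⟶ ModuleCat.of S B) (hx : R.complex.d 2 1 ≫ x = 0)
  suffices h : ∃ y : R.complex.X 0 ⟶ ModuleCat.of S B, R.complex.d 1 0 ≫ y = x from h
  let p : R.complex.X 0 →ₗ[S] A := (R.π.f 0).hom
  have hp : Function.Surjective p := by
    have : Epi (R.π.f 0) := inferInstance
    exact (ModuleCat.epi_iff_surjective _).1 this
  have hproj : Module.Projective S (R.complex.X 0) :=
    (IsProjective.iff_projective _).2 (R.projective 0)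
  have hker : ∀ v, p v = 0 → ∃ w, R.complex.d 1 0 w = v :=
    (ShortComplex.moduleCat_exact_iff _).1 R.exact₀
  have hker' : ∀ v, R.complex.d 1 0 v = 0 → ∃ w, R.complex.d 2 1 w = v :=
    (ShortComplex.moduleCat_exact_iff _).1 (R.exact_succ 0)
  let D : R.complex.X 1 →ₗ[S] LinearMap.ker p := (R.complex.d 1 0).hom.codRestrict _ fun v =>
    ConcreteCategory.congr_hom R.complex_d_comp_π_f_zero v
  have hD : Function.Surjective D := fun v => by
    obtain ⟨w, hw⟩ := hker v.1 v.2
    exact ⟨w, Subtype.ext hw⟩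
  obtain ⟨G, hG⟩ := exists_factor_of_ker_le D hD x.hom fun v hv => by
    obtain ⟨w, rfl⟩ := hker' v (congrArg Subtype.val hv)
    exact ConcreteCategory.congr_hom hx w
  obtain ⟨E, hE⟩ := exists_extension_of_presentation q hq p hp hext G
  refine ⟨ModuleCat.ofHom E, ModuleCat.hom_ext (LinearMap.ext fun v => ?_)⟩
  exact (hE (D v)).trans (hG v)

end ExtOne

section Complex

variable {π}

/-- Precomposition, as a map of right modules between dual modules. -/
noncomputable def precomp {P Q : Type} [AddCommGroup P] [AddCommGroup Q] [Module (GroupRing π) P]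
    [Module (GroupRing π) Q] (f : Q →ₗ[GroupRing π] P) :
    (P →ₗ[GroupRing π] GroupRing π) →ₗ[(GroupRing π)ᵐᵒᵖ] (Q →ₗ[GroupRing π] GroupRing π) where
  toFun z := z.comp f
  map_add' _ _ := rfl
  map_smul' _ _ := rfl

@[simp]
lemma precomp_apply {P Q : Type} [AddCommGroup P] [AddCommGroup Q] [Module (GroupRing π) P]
    [Module (GroupRing π) Q] (f : Q →ₗ[GroupRing π] P) (z : P →ₗ[GroupRing π] GroupRing π)
    (x : Q) : precomp f z x = z (f x) := rfl

/-- The cocycles on `P₂` whose values on the elements `e i`, for `i` in `T`, lie in the right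
ideal generated by `g (src i) - 1` and `g (tgt i) - 1`. -/
def constrainedCocycles {P₂ P₃ : Type} [AddCommGroup P₂] [AddCommGroup P₃]
    [Module (GroupRing π) P₂] [Module (GroupRing π) P₃] (d₃ : P₃ →ₗ[GroupRing π] P₂)
    {ι : Type} (e : ι → P₂) (src tgt : ι → π) (T : Set ι) :
    Submodule (GroupRing π)ᵐᵒᵖ (P₂ →ₗ[GroupRing π] GroupRing π) where
  carrier := {z | (∀ w, z (d₃ w) = 0) ∧ ∀ i ∈ T, z (e i) ∈ subOneIdeal (src i) (tgt i)}
  zero_mem' := ⟨fun _ => rfl, fun _ _ => zero_mem _⟩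
  add_mem' h h' := ⟨fun w => by simp [h.1 w, h'.1 w], fun i hi => add_mem (h.2 i hi) (h'.2 i hi)⟩
  smul_mem' c z h := ⟨fun w => by simp [h.1 w], fun i hi => by
    obtain ⟨r, s, hrs⟩ := h.2 i hi
    exact ⟨r * c.unop, s * c.unop, by simp [hrs, mul_assoc]⟩⟩

/-- The value of the differential on the edge from `a` to `b`. -/
noncomputable def edgeBoundary (g : ℕ → π) (a b : ℕ) : ℕ →₀ GroupRing π :=
  Finsupp.single b (subOne (g a)) - Finsupp.single a (subOne (g b))

/-- The differential in degree one. -/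
noncomputable def vertexBoundary (g : ℕ → π) : (ℕ →₀ GroupRing π) →ₗ[GroupRing π] GroupRing π :=
  Finsupp.linearCombination (GroupRing π) fun v => subOne (g v)

lemma vertexBoundary_edgeBoundary (g : ℕ → π) {a b : ℕ} (h : Commute (g a) (g b)) :
    vertexBoundary g (edgeBoundary g a b) = 0 := by
  simp [vertexBoundary, edgeBoundary, (subOne_commute h).eq]

lemma apply_edgeBoundary (g : ℕ → π) (a b : ℕ)
    (y : (ℕ →₀ GroupRing π) →ₗ[GroupRing π] GroupRing π) :
    y (edgeBoundary g a b) =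
      subOne (g a) * y (Finsupp.single b 1) - subOne (g b) * y (Finsupp.single a 1) := by
  rw [edgeBoundary, map_sub, ← smul_eq_mul, ← smul_eq_mul, ← map_smul, ← map_smul,
    Finsupp.smul_single, Finsupp.smul_single, smul_eq_mul, smul_eq_mul, mul_one, mul_one]

lemma apply_edgeBoundary_mem (g : ℕ → π) (a b : ℕ)
    (y : (ℕ →₀ GroupRing π) →ₗ[GroupRing π] GroupRing π) :
    y (edgeBoundary g a b) ∈ subOneIdeal (g a) (g b) :=
  ⟨y (Finsupp.single b 1), -y (Finsupp.single a 1), by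
    rw [apply_edgeBoundary]; simp [sub_eq_add_neg]⟩

/-- The part in degrees two and three of the chain complex of the universal cover of the Salvetti
complex of a two-dimensional flag complex, with coefficients induced along `g`. -/
structure SalvettiComplex (S : Finset ℕ) (Γ : SimpleGraph ℕ) (g : ℕ → π) where
  ι : Type
  src : ι → ℕ
  tgt : ι → ℕ
  P₂ : Type
  P₃ : Type
  [instGroup₂ : AddCommGroup P₂]
  [instGroup₃ : AddCommGroup P₃]
  [instModule₂ : Module (GroupRing π) P₂]
  [instModule₃ : Module (GroupRing π) P₃]
  [free₂ : Module.Free (GroupRing π) P₂]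
  [free₃ : Module.Free (GroupRing π) P₃]
  [finite₂ : Module.Finite (GroupRing π) P₂]
  [finite₃ : Module.Finite (GroupRing π) P₃]
  e : ι → P₂
  d₂ : P₂ →ₗ[GroupRing π] (ℕ →₀ GroupRing π)
  d₃ : P₃ →ₗ[GroupRing π] P₂
  d₂_e : ∀ i, d₂ (e i) = edgeBoundary g (src i) (tgt i)
  exists_edge : ∀ a b, Γ.Adj a b → ∃ i, (src i = a ∧ tgt i = b) ∨ (src i = b ∧ tgt i = a)
  d₂_apply_eq_zero : ∀ x, ∀ v ∉ S, d₂ x v = 0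
  vertexBoundary_d₂ : ∀ x, vertexBoundary g (d₂ x) = 0
  d₃_injective : Function.Injective d₃
  exact : ∀ x, d₂ x = 0 ↔ ∃ w, d₃ w = x
  torsion : ∀ (T : Set ι) (F : constrainedCocycles d₃ e (g ∘ src) (g ∘ tgt) T
      →ₗ[(GroupRing π)ᵐᵒᵖ] GroupRing π), (∀ y h, F ⟨precomp d₂ y, h⟩ = 0) → F = 0

attribute [instance] SalvettiComplex.instGroup₂ SalvettiComplex.instGroup₃
  SalvettiComplex.instModule₂ SalvettiComplex.instModule₃ SalvettiComplex.free₂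
  SalvettiComplex.free₃ SalvettiComplex.finite₂ SalvettiComplex.finite₃

namespace SalvettiComplex

variable {S : Finset ℕ} {Γ : SimpleGraph ℕ} {g : ℕ → π}

/-- The complex of a graph without edges. -/
noncomputable def single (v : ℕ) : SalvettiComplex {v} ⊥ g where
  ι := Empty
  src := Empty.elim
  tgt := Empty.elim
  P₂ := PUnit
  P₃ := PUnit
  e := Empty.elim
  d₂ := 0
  d₃ := 0
  d₂_e i := i.elim
  exists_edge a b h := h.elim
  d₂_apply_eq_zero _ _ _ := rfl
  vertexBoundary_d₂ _ := by simp
  d₃_injective := Function.injective_of_subsingleton _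
  exact x := ⟨fun _ => ⟨x, rfl⟩, fun _ => rfl⟩
  torsion T F _ := by
    refine LinearMap.ext fun z => ?_
    have : z = 0 := Subtype.ext (LinearMap.ext fun x => by
      rw [Subsingleton.elim x 0, map_zero, map_zero])
    rw [this, map_zero, map_zero]

lemma d₂_d₃ (C : SalvettiComplex S Γ g) (w : C.P₃) : C.d₂ (C.d₃ w) = 0 := (C.exact _).2 ⟨w, rfl⟩

lemma precomp_d₂_mem {ι P₂ P₃ : Type} [AddCommGroup P₂] [AddCommGroup P₃]
    [Module (GroupRing π) P₂] [Module (GroupRing π) P₃] {d₃ : P₃ →ₗ[GroupRing π] P₂}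
    {d₂ : P₂ →ₗ[GroupRing π] (ℕ →₀ GroupRing π)} (h : ∀ w, d₂ (d₃ w) = 0) {e : ι → P₂}
    {src tgt : ι → ℕ} (he : ∀ i, d₂ (e i) = edgeBoundary g (src i) (tgt i)) (T : Set ι)
    (y : (ℕ →₀ GroupRing π) →ₗ[GroupRing π] GroupRing π) :
    precomp d₂ y ∈ constrainedCocycles d₃ e (g ∘ src) (g ∘ tgt) T :=
  ⟨fun w => by simp [h], fun i _ => by
    rw [precomp_apply, he]
    exact apply_edgeBoundary_mem _ _ _ _⟩

end SalvettiComplex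

end Complex

section AttachEdge

namespace SalvettiComplex

variable {π} {S : Finset ℕ} {Γ : SimpleGraph ℕ} {g : ℕ → π}

lemma sup_fromEdgeSet_pair_adj {Γ : SimpleGraph ℕ} {a b u v : ℕ}
    (h : (Γ ⊔ SimpleGraph.fromEdgeSet {s(a, b)}).Adj u v) :
    Γ.Adj u v ∨ (a = u ∧ b = v) ∨ (a = v ∧ b = u) := by
  simp only [SimpleGraph.sup_adj, SimpleGraph.fromEdgeSet_adj, Set.mem_singleton_iff,
    Sym2.eq_iff] at h
  tauto

/-- The differential in degree two after attaching the edge from `a` to `b`. -/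
noncomputable def attachEdgeD₂ (C : SalvettiComplex S Γ g) (a b : ℕ) :
    C.P₂ × GroupRing π →ₗ[GroupRing π] (ℕ →₀ GroupRing π) :=
  C.d₂.coprod (LinearMap.toSpanSingleton _ _ (edgeBoundary g a b))

lemma attachEdgeD₂_apply (C : SalvettiComplex S Γ g) (a b : ℕ) (x : C.P₂) (p : GroupRing π) :
    C.attachEdgeD₂ a b (x, p) = C.d₂ x + p • edgeBoundary g a b := by
  simp [attachEdgeD₂]

/-- The differential in degree three after attaching an edge. -/
noncomputable def attachEdgeD₃ (C : SalvettiComplex S Γ g) :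
    C.P₃ →ₗ[GroupRing π] C.P₂ × GroupRing π :=
  (LinearMap.inl _ _ _).comp C.d₃

lemma attachEdgeD₃_apply (C : SalvettiComplex S Γ g) (w : C.P₃) :
    C.attachEdgeD₃ w = (C.d₃ w, 0) := rfl

/-- The classes of the edges after attaching an edge. -/
noncomputable def attachEdgeE (C : SalvettiComplex S Γ g) :
    Option C.ι → C.P₂ × GroupRing π
  | none => (0, 1)
  | some i => (C.e i, 0)

lemma edgeBoundary_apply_right (g : ℕ → π) {a b : ℕ} (h : a ≠ b) :
    edgeBoundary g a b b = subOne (g a) := by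
  simp [edgeBoundary, h]

lemma edgeBoundary_apply_of_ne (g : ℕ → π) {a b v : ℕ} (ha : v ≠ a) (hb : v ≠ b) :
    edgeBoundary g a b v = 0 := by
  simp [edgeBoundary, ha.symm, hb.symm]

lemma attachEdge_torsion (C : SalvettiComplex S Γ g) {a b : ℕ} (ha : a ∈ S) (hb : b ∉ S)
    (hab : Commute (g a) (g b)) {χ : π →* Multiplicative ℤ}
    (hχ : χ (g a) = Multiplicative.ofAdd 1) (T : Set (Option C.ι))
    (F : constrainedCocycles C.attachEdgeD₃ C.attachEdgeE (g ∘ fun i => i.elim a C.src)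
      (g ∘ fun i => i.elim b C.tgt) T →ₗ[(GroupRing π)ᵐᵒᵖ] GroupRing π)
    (hF : ∀ y h, F ⟨precomp (C.attachEdgeD₂ a b) y, h⟩ = 0) : F = 0 := by
  have hne : a ≠ b := fun h => hb (h ▸ ha)
  let inc : GroupRing π →ₗ[(GroupRing π)ᵐᵒᵖ] (C.P₂ × GroupRing π →ₗ[GroupRing π] GroupRing π) :=
    { toFun := fun ζ => (LinearMap.toSpanSingleton _ _ ζ).comp (LinearMap.snd _ _ _)
      map_add' := fun ζ ζ' => by ext <;> simp
      map_smul' := fun c ζ => by ext <;> simp }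
  have inc_apply : ∀ ζ x p, inc ζ (x, p) = p * ζ := fun _ _ _ => rfl
  have inc_mem : ∀ ζ, (none ∈ T → ζ ∈ subOneIdeal (g a) (g b)) →
      inc ζ ∈ constrainedCocycles C.attachEdgeD₃ C.attachEdgeE (g ∘ fun i => i.elim a C.src)
      (g ∘ fun i => i.elim b C.tgt) T := fun ζ hζ => by
    refine ⟨fun w => by simp [attachEdgeD₃_apply, inc_apply], ?_⟩
    rintro (_ | i) hi
    · simpa [attachEdgeE, inc_apply] using hζ hi
    · simp [attachEdgeE, inc_apply, zero_mem]
  have mem_of_inc_mem : ∀ ζ, inc ζ ∈ constrainedCocycles C.attachEdgeD₃ C.attachEdgeE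
      (g ∘ fun i => i.elim a C.src) (g ∘ fun i => i.elim b C.tgt) T →
      none ∈ T → ζ ∈ subOneIdeal (g a) (g b) := fun ζ h hT => by
    simpa [attachEdgeE, inc_apply] using h.2 none hT
  have hcob : ∀ r h, F ⟨inc (subOne (g a) * r), h⟩ = 0 := fun r h => by
    have : inc (subOne (g a) * r) = precomp (C.attachEdgeD₂ a b)
        ((LinearMap.toSpanSingleton _ _ r).comp (Finsupp.lapply b)) := by
      refine LinearMap.ext fun ⟨x, p⟩ => ?_
      simp [inc_apply, attachEdgeD₂_apply, C.d₂_apply_eq_zero x b hb,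
        edgeBoundary_apply_right g hne, mul_assoc]
    simp only [this]
    exact hF _ _
  have hmul : ∀ ζ h r h', F ⟨inc (ζ * r), h'⟩ = F ⟨inc ζ, h⟩ * r := fun ζ h r h' => by
    have : (⟨inc (ζ * r), h'⟩ : constrainedCocycles C.attachEdgeD₃ C.attachEdgeE
        (g ∘ fun i => i.elim a C.src) (g ∘ fun i => i.elim b C.tgt) T) =
        MulOpposite.op r • ⟨inc ζ, h⟩ := Subtype.ext (inc.map_smul (MulOpposite.op r) ζ)
    rw [this, map_smul]
    rfl
  have hinc : ∀ ζ h, F ⟨inc ζ, h⟩ = 0 := fun ζ h => by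
    by_cases hT : none ∈ T
    · obtain ⟨r, s, rfl⟩ := mem_of_inc_mem ζ h hT
      have h₁ := inc_mem (subOne (g a) * r) fun _ => ⟨r, 0, by simp⟩
      have h₂ := inc_mem (subOne (g b) * s) fun _ => ⟨0, s, by simp⟩
      have h₃ := inc_mem (subOne (g b)) fun _ => ⟨0, 1, by simp⟩
      have h₄ := inc_mem (subOne (g b) * subOne (g a)) fun _ => ⟨0, subOne (g a), by simp⟩
      have h₅ : F ⟨_, h₃⟩ = 0 := eq_zero_of_mul_subOne_eq_zero hχ <| by
        rw [← hmul _ _ _ h₄]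
        simp only [← (subOne_commute hab).eq]
        exact hcob _ _
      have : (⟨inc (subOne (g a) * r + subOne (g b) * s), h⟩ : constrainedCocycles C.attachEdgeD₃
          C.attachEdgeE (g ∘ fun i => i.elim a C.src) (g ∘ fun i => i.elim b C.tgt) T) =
          ⟨_, h₁⟩ + ⟨_, h₂⟩ := Subtype.ext (inc.map_add _ _)
      rw [this, map_add, hcob, hmul _ h₃, h₅, zero_mul, add_zero]
    · have h₁ := inc_mem 1 fun h => absurd h hT
      have h₂ := inc_mem (1 * subOne (g a)) fun h => absurd h hT
      have h₃ : F ⟨_, h₁⟩ = 0 := eq_zero_of_mul_subOne_eq_zero hχ <| by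
        rw [← hmul _ _ _ h₂]
        have := hcob 1 (by rw [mul_one, ← one_mul (subOne (g a))]; exact h₂)
        simpa using this
      have := hmul 1 h₁ ζ (by rwa [one_mul])
      simpa [h₃] using this
  let lift : constrainedCocycles C.d₃ C.e (g ∘ C.src) (g ∘ C.tgt) {i | some i ∈ T}
      →ₗ[(GroupRing π)ᵐᵒᵖ] constrainedCocycles C.attachEdgeD₃ C.attachEdgeE
      (g ∘ fun i => i.elim a C.src) (g ∘ fun i => i.elim b C.tgt) T :=
    ((precomp (LinearMap.fst _ _ _)).comp (Submodule.subtype _)).codRestrict _ fun z => by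
      refine ⟨fun w => z.2.1 w, ?_⟩
      rintro (_ | i) hi
      · simp [attachEdgeE, zero_mem]
      · exact z.2.2 i hi
  have lift_apply : ∀ z x p, (lift z).1 (x, p) = z.1 x := fun _ _ _ => rfl
  have hlift : F.comp lift = 0 := C.torsion _ _ fun y h => by
    have h₁ := precomp_d₂_mem (d₃ := C.attachEdgeD₃) (d₂ := C.attachEdgeD₂ a b) (g := g)
      (e := C.attachEdgeE) (src := fun i => i.elim a C.src) (tgt := fun i => i.elim b C.tgt)
      (fun w => by simp [attachEdgeD₃_apply, attachEdgeD₂_apply, C.d₂_d₃]) (by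
        rintro (_ | i)
        · simp [attachEdgeE, attachEdgeD₂_apply]
        · simp [attachEdgeE, attachEdgeD₂_apply, C.d₂_e]) T y
    have h₂ := inc_mem (y (edgeBoundary g a b)) fun _ => apply_edgeBoundary_mem _ _ _ _
    have h₃ := hF y h₁
    have : (⟨_, h₁⟩ : constrainedCocycles _ _ _ _ T) = lift ⟨precomp C.d₂ y, h⟩ + ⟨_, h₂⟩ :=
      Subtype.ext <| LinearMap.ext fun ⟨x, p⟩ => by
        simp [lift_apply, attachEdgeD₂_apply, inc_apply]
    rwa [this, map_add, hinc, add_zero] at h₃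
  refine LinearMap.ext fun z => ?_
  have h₁ := inc_mem (z.1 (0, 1)) fun hT => z.2.2 none hT
  have : z = lift ⟨precomp (LinearMap.inl (GroupRing π) C.P₂ (GroupRing π)) z.1, fun w => z.2.1 w,
      fun i hi => z.2.2 (some i) hi⟩ + ⟨_, h₁⟩ := Subtype.ext <| LinearMap.ext fun ⟨x, p⟩ => by
    have : z.1 (x, p) = z.1 (x, 0) + p • z.1 (0, 1) := by
      rw [← map_smul, ← map_add]
      simp
    simpa [lift_apply, inc_apply] using this
  rw [this, map_add, hinc, add_zero]
  exact LinearMap.congr_fun hlift _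

/-- The complex obtained by attaching the edge from `a` to the new vertex `b`. -/
noncomputable def attachEdge (C : SalvettiComplex S Γ g) {a b : ℕ} (ha : a ∈ S) (hb : b ∉ S)
    (hab : Commute (g a) (g b)) {χ : π →* Multiplicative ℤ}
    (hχ : χ (g a) = Multiplicative.ofAdd 1) :
    SalvettiComplex (insert b S) (Γ ⊔ SimpleGraph.fromEdgeSet {s(a, b)}) g where
  ι := Option C.ι
  src i := i.elim a C.src
  tgt i := i.elim b C.tgt
  P₂ := C.P₂ × GroupRing π
  P₃ := C.P₃
  e := C.attachEdgeE
  d₂ := C.attachEdgeD₂ a b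
  d₃ := C.attachEdgeD₃
  d₂_e := by
    rintro (_ | i)
    · simp [attachEdgeE, attachEdgeD₂_apply]
    · simp [attachEdgeE, attachEdgeD₂_apply, C.d₂_e]
  exists_edge u v h := by
    obtain h | h := sup_fromEdgeSet_pair_adj h
    · obtain ⟨i, hi⟩ := C.exists_edge u v h
      exact ⟨some i, hi⟩
    · exact ⟨none, h⟩
  d₂_apply_eq_zero := by
    rintro ⟨x, p⟩ v hv
    rw [Finset.mem_insert, not_or] at hv
    have hva : v ≠ a := fun h => hv.2 (h ▸ ha)
    simp [attachEdgeD₂_apply, C.d₂_apply_eq_zero x v hv.2, edgeBoundary_apply_of_ne g hva hv.1]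
  vertexBoundary_d₂ := by
    rintro ⟨x, p⟩
    simp [attachEdgeD₂_apply, C.vertexBoundary_d₂, vertexBoundary_edgeBoundary g hab]
  d₃_injective := fun w w' h => C.d₃_injective (congrArg Prod.fst h)
  exact := by
    rintro ⟨x, p⟩
    rw [attachEdgeD₂_apply]
    constructor
    · intro h
      have hne : a ≠ b := fun h => hb (h ▸ ha)
      have hp : p = 0 := eq_zero_of_mul_subOne_eq_zero hχ <| by
        simpa [C.d₂_apply_eq_zero x b hb, edgeBoundary_apply_right g hne]
          using DFunLike.congr_fun h b
      rw [hp, zero_smul, add_zero] at h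
      obtain ⟨w, hw⟩ := (C.exact x).1 h
      exact ⟨w, by rw [attachEdgeD₃_apply, hw, hp]⟩
    · rintro ⟨w, hw⟩
      rw [attachEdgeD₃_apply, Prod.mk.injEq] at hw
      rw [← hw.1, ← hw.2, C.d₂_d₃, zero_smul, add_zero]
  torsion T F hF := C.attachEdge_torsion ha hb hab hχ T F hF

end SalvettiComplex

end AttachEdge

section AttachTriangle

namespace SalvettiComplex

variable {π} {S : Finset ℕ} {Γ : SimpleGraph ℕ} {g : ℕ → π}

/-- The differential in degree two after attaching a triangle with new vertex `c` along the edge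
`i`. -/
noncomputable def attachTriangleD₂ (C : SalvettiComplex S Γ g) (i : C.ι) (c : ℕ) :
    C.P₂ × GroupRing π × GroupRing π →ₗ[GroupRing π] (ℕ →₀ GroupRing π) :=
  C.d₂.coprod ((LinearMap.toSpanSingleton _ _ (edgeBoundary g (C.src i) c)).coprod
    (LinearMap.toSpanSingleton _ _ (edgeBoundary g (C.tgt i) c)))

lemma attachTriangleD₂_apply (C : SalvettiComplex S Γ g) (i : C.ι) (c : ℕ) (x : C.P₂)
    (p q : GroupRing π) : C.attachTriangleD₂ i c (x, p, q) =
      C.d₂ x + (p • edgeBoundary g (C.src i) c + q • edgeBoundary g (C.tgt i) c) := by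
  simp [attachTriangleD₂]

/-- The differential in degree three after attaching a triangle with new vertex `c` along the edge
`i`. -/
noncomputable def attachTriangleD₃ (C : SalvettiComplex S Γ g) (i : C.ι) (c : ℕ) :
    C.P₃ × GroupRing π →ₗ[GroupRing π] C.P₂ × GroupRing π × GroupRing π :=
  ((LinearMap.inl _ _ _).comp C.d₃).coprod (LinearMap.toSpanSingleton _ _
    (subOne (g c) • C.e i, -subOne (g (C.tgt i)), subOne (g (C.src i))))

lemma attachTriangleD₃_apply (C : SalvettiComplex S Γ g) (i : C.ι) (c : ℕ) (w : C.P₃)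
    (t : GroupRing π) : C.attachTriangleD₃ i c (w, t) =
      (C.d₃ w + (t * subOne (g c)) • C.e i, -(t * subOne (g (C.tgt i))),
        t * subOne (g (C.src i))) := by
  simp [attachTriangleD₃, mul_smul]

/-- The classes of the edges after attaching a triangle along an edge. -/
noncomputable def attachTriangleE (C : SalvettiComplex S Γ g) :
    Option (Option C.ι) → C.P₂ × GroupRing π × GroupRing π
  | none => (0, 1, 0)
  | some none => (0, 0, 1)
  | some (some i) => (C.e i, 0, 0)

/-- The sources of the edges after attaching a triangle along the edge `i`. -/
def attachTriangleSrc (C : SalvettiComplex S Γ g) (i : C.ι) : Option (Option C.ι) → ℕ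
  | none => C.src i
  | some none => C.tgt i
  | some (some j) => C.src j

/-- The targets of the edges after attaching a triangle with new vertex `c` along an edge. -/
def attachTriangleTgt (C : SalvettiComplex S Γ g) (c : ℕ) : Option (Option C.ι) → ℕ
  | none => c
  | some none => c
  | some (some j) => C.tgt j

lemma attachTriangleD₂_e (C : SalvettiComplex S Γ g) (i : C.ι) (c : ℕ) (j : Option (Option C.ι)) :
    C.attachTriangleD₂ i c (C.attachTriangleE j) =
      edgeBoundary g (C.attachTriangleSrc i j) (C.attachTriangleTgt c j) := by
  obtain _ | _ | j := j
  · simp [attachTriangleE, attachTriangleD₂_apply, attachTriangleSrc, attachTriangleTgt]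
  · simp [attachTriangleE, attachTriangleD₂_apply, attachTriangleSrc, attachTriangleTgt]
  · simp [attachTriangleE, attachTriangleD₂_apply, attachTriangleSrc, attachTriangleTgt, C.d₂_e]

lemma attachTriangleD₂_d₃ (C : SalvettiComplex S Γ g) (i : C.ι) (c : ℕ)
    (hab : Commute (g (C.src i)) (g (C.tgt i))) (hac : Commute (g (C.src i)) (g c))
    (hbc : Commute (g (C.tgt i)) (g c)) (w : C.P₃ × GroupRing π) :
    C.attachTriangleD₂ i c (C.attachTriangleD₃ i c w) = 0 := by
  obtain ⟨w, t⟩ := w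
  rw [attachTriangleD₃_apply, attachTriangleD₂_apply, map_add, C.d₂_d₃, map_smul, C.d₂_e]
  simp only [edgeBoundary, smul_sub, Finsupp.smul_single, smul_eq_mul, mul_assoc, neg_mul,
    (subOne_commute hab).eq, (subOne_commute hac).eq, (subOne_commute hbc).eq,
    Finsupp.single_neg]
  abel

lemma attachTriangle_torsion (C : SalvettiComplex S Γ g) (i : C.ι) {c : ℕ} (ha : C.src i ∈ S)
    (hb : C.tgt i ∈ S) (hc : c ∉ S) (hab : Commute (g (C.src i)) (g (C.tgt i)))
    (hac : Commute (g (C.src i)) (g c)) (hbc : Commute (g (C.tgt i)) (g c))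
    {χ ω ν : π →* Multiplicative ℤ} (hχ : χ (g (C.src i)) = Multiplicative.ofAdd 1)
    (hω : ω (g (C.tgt i)) = Multiplicative.ofAdd 1) (hω' : ω (g (C.src i)) = 1)
    (hν : ν (g c) = Multiplicative.ofAdd 1) (hνa : ν (g (C.src i)) = 1)
    (hνb : ν (g (C.tgt i)) = 1) (T : Set (Option (Option C.ι)))
    (F : constrainedCocycles (C.attachTriangleD₃ i c) C.attachTriangleE
      (g ∘ C.attachTriangleSrc i) (g ∘ C.attachTriangleTgt c) T →ₗ[(GroupRing π)ᵐᵒᵖ] GroupRing π)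
    (hF : ∀ y h, F ⟨precomp (C.attachTriangleD₂ i c) y, h⟩ = 0) : F = 0 := by
  have hca : C.src i ≠ c := fun h => hc (h ▸ ha)
  have hcb : C.tgt i ≠ c := fun h => hc (h ▸ hb)
  have z_apply : ∀ (z : C.P₂ × GroupRing π × GroupRing π →ₗ[GroupRing π] GroupRing π) x p q,
      z (x, p, q) = z (x, 0, 0) + (p * z (0, 1, 0) + q * z (0, 0, 1)) := fun z x p q => by
    rw [← smul_eq_mul, ← smul_eq_mul, ← map_smul, ← map_smul, ← map_add, ← map_add]
    simp
  have z_smul : ∀ (z : C.P₂ × GroupRing π × GroupRing π →ₗ[GroupRing π] GroupRing π) r x,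
      z (r • x, 0, 0) = r * z (x, 0, 0) := fun z r x => by
    rw [← smul_eq_mul, ← map_smul]
    simp
  have hcocycle : ∀ z : constrainedCocycles (C.attachTriangleD₃ i c) C.attachTriangleE
      (g ∘ C.attachTriangleSrc i) (g ∘ C.attachTriangleTgt c) T,
      subOne (g c) * z.1 (C.e i, 0, 0) - subOne (g (C.tgt i)) * z.1 (0, 1, 0) +
        subOne (g (C.src i)) * z.1 (0, 0, 1) = 0 := fun z => by
    have := z.2.1 (0, 1)
    rw [attachTriangleD₃_apply, z_apply, map_zero, zero_add, z_smul, one_mul, one_mul, one_mul,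
      neg_mul, ← add_assoc, ← sub_eq_add_neg] at this
    exact this
  let ρ : constrainedCocycles (C.attachTriangleD₃ i c) C.attachTriangleE
      (g ∘ C.attachTriangleSrc i) (g ∘ C.attachTriangleTgt c) T →ₗ[(GroupRing π)ᵐᵒᵖ]
      constrainedCocycles C.d₃ C.e (g ∘ C.src) (g ∘ C.tgt) (insert i {j | some (some j) ∈ T}) :=
    ((precomp (LinearMap.inl (GroupRing π) C.P₂ (GroupRing π × GroupRing π))).comp
      (Submodule.subtype _)).codRestrict _ fun z => by
      refine ⟨fun w => ?_, ?_⟩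
      · have := z.2.1 (w, 0)
        rw [attachTriangleD₃_apply, zero_mul, zero_smul, add_zero, zero_mul, zero_mul,
          neg_zero] at this
        exact this
      · rintro j (rfl | hj)
        · refine mem_subOneIdeal_of_subOne_mul_mem (c := g c) hac hbc hνa hνb hν
            ⟨-z.1 (0, 0, 1), z.1 (0, 1, 0), ?_⟩
          rw [mul_neg, ← sub_eq_zero]
          refine Eq.trans ?_ (hcocycle z)
          exact (fun x y t => by abel : ∀ x y t : GroupRing π, x - (-y + t) = x - t + y) _ _ _
        · exact z.2.2 (some (some j)) hj
  have ρ_apply : ∀ z x, (ρ z).1 x = z.1 (x, 0, 0) := fun _ _ => rfl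
  have hρ : Function.Surjective ρ := fun z => by
    obtain ⟨r, s, hrs⟩ := z.2.2 i (Set.mem_insert _ _)
    let z' : C.P₂ × GroupRing π × GroupRing π →ₗ[GroupRing π] GroupRing π :=
      z.1.coprod ((LinearMap.toSpanSingleton _ _ (subOne (g c) * s)).coprod
        (LinearMap.toSpanSingleton _ _ (-(subOne (g c) * r))))
    have hz' : ∀ x p q, z' (x, p, q) =
        z.1 x + (p * (subOne (g c) * s) + q * (-(subOne (g c) * r))) := fun x p q => by
      simp [z']
    refine ⟨⟨z', ?_, ?_⟩, Subtype.ext <| LinearMap.ext fun x => by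
      rw [ρ_apply, hz', zero_mul, zero_mul, add_zero, add_zero]⟩
    · rintro ⟨w, t⟩
      rw [attachTriangleD₃_apply, hz', map_add, z.2.1, map_smul, hrs]
      simp only [Function.comp_apply, smul_eq_mul, mul_add, mul_assoc, neg_mul, mul_neg]
      rw [← mul_assoc (subOne (g c)) (subOne (g (C.src i))), (subOne_commute hac).symm.eq,
        ← mul_assoc (subOne (g c)) (subOne (g (C.tgt i))), (subOne_commute hbc).symm.eq,
        mul_assoc, mul_assoc]
      abel
    · rintro (_ | _ | j) hj
      · exact ⟨0, s, by simp [attachTriangleE, hz', attachTriangleTgt]⟩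
      · exact ⟨0, -r, by simp [attachTriangleE, hz', attachTriangleTgt]⟩
      · simpa [attachTriangleE, hz', attachTriangleTgt, attachTriangleSrc] using
          z.2.2 j (Set.mem_insert_of_mem _ hj)
  have hker : ∀ z, ρ z = 0 → F z = 0 := fun z hz => by
    have hz' : ∀ x, z.1 (x, 0, 0) = 0 := fun x => by
      rw [← ρ_apply, hz]
      rfl
    have h₁ := hcocycle z
    rw [hz', mul_zero, zero_sub, neg_add_eq_zero] at h₁
    obtain ⟨t, ht₁, ht₂⟩ := exists_of_subOne_mul_eq hab hχ hω hω' h₁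
    have h₂ : z.1 = precomp (C.attachTriangleD₂ i c)
        ((LinearMap.toSpanSingleton _ _ t).comp (Finsupp.lapply c)) := by
      refine LinearMap.ext fun ⟨x, p, q⟩ => ?_
      rw [z_apply, hz', ht₁, ht₂]
      simp [attachTriangleD₂_apply, C.d₂_apply_eq_zero x c hc, edgeBoundary_apply_right g hca,
        edgeBoundary_apply_right g hcb, mul_assoc, add_mul]
    have h₃ : z = ⟨_, h₂ ▸ z.2⟩ := Subtype.ext h₂
    rw [h₃]
    exact hF _ _
  obtain ⟨F₀, hF₀⟩ := exists_factor_of_ker_le (S := (GroupRing π)ᵐᵒᵖ)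
    (X := constrainedCocycles (C.attachTriangleD₃ i c) C.attachTriangleE
      (g ∘ C.attachTriangleSrc i) (g ∘ C.attachTriangleTgt c) T)
    (Y := constrainedCocycles C.d₃ C.e (g ∘ C.src) (g ∘ C.tgt)
      (insert i {j | some (some j) ∈ T})) ρ hρ F hker
  have hF₀' : F₀ = 0 := C.torsion _ _ fun y h => by
    have h₁ := precomp_d₂_mem (C.attachTriangleD₂_d₃ i c hab hac hbc)
      (C.attachTriangleD₂_e i c) T y
    have h₂ : ρ ⟨_, h₁⟩ = ⟨precomp C.d₂ y, h⟩ := Subtype.ext <| LinearMap.ext fun x => by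
      rw [ρ_apply]
      simp only [precomp_apply, attachTriangleD₂_apply, zero_smul, add_zero]
    rw [← h₂, hF₀, hF]
  refine LinearMap.ext fun z => ?_
  rw [← hF₀, hF₀']
  rfl

lemma exists_edge_of_sup_fromEdgeSet {Γ : SimpleGraph ℕ} {a b c u v : ℕ}
    (h : (Γ ⊔ SimpleGraph.fromEdgeSet {s(a, c), s(b, c)}).Adj u v) :
    Γ.Adj u v ∨ ((a = u ∧ c = v) ∨ (a = v ∧ c = u)) ∨ ((b = u ∧ c = v) ∨ (b = v ∧ c = u)) := by
  simp only [SimpleGraph.sup_adj, SimpleGraph.fromEdgeSet_adj, Set.mem_insert_iff,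
    Set.mem_singleton_iff, Sym2.eq_iff] at h
  tauto

/-- The complex obtained by attaching a triangle with new vertex `c` along the edge `i`. -/
noncomputable def attachTriangle (C : SalvettiComplex S Γ g) (i : C.ι) {c : ℕ} (ha : C.src i ∈ S)
    (hb : C.tgt i ∈ S) (hc : c ∉ S) (hab : Commute (g (C.src i)) (g (C.tgt i)))
    (hac : Commute (g (C.src i)) (g c)) (hbc : Commute (g (C.tgt i)) (g c))
    {χ ω ν : π →* Multiplicative ℤ} (hχ : χ (g (C.src i)) = Multiplicative.ofAdd 1)
    (hω : ω (g (C.tgt i)) = Multiplicative.ofAdd 1) (hω' : ω (g (C.src i)) = 1)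
    (hν : ν (g c) = Multiplicative.ofAdd 1) (hνa : ν (g (C.src i)) = 1)
    (hνb : ν (g (C.tgt i)) = 1) :
    SalvettiComplex (insert c S)
      (Γ ⊔ SimpleGraph.fromEdgeSet {s(C.src i, c), s(C.tgt i, c)}) g where
  ι := Option (Option C.ι)
  src := C.attachTriangleSrc i
  tgt := C.attachTriangleTgt c
  P₂ := C.P₂ × GroupRing π × GroupRing π
  P₃ := C.P₃ × GroupRing π
  e := C.attachTriangleE
  d₂ := C.attachTriangleD₂ i c
  d₃ := C.attachTriangleD₃ i c
  d₂_e := C.attachTriangleD₂_e i c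
  exists_edge u v h := by
    obtain h | h | h := exists_edge_of_sup_fromEdgeSet h
    · obtain ⟨j, hj⟩ := C.exists_edge u v h
      exact ⟨some (some j), hj⟩
    · exact ⟨none, h⟩
    · exact ⟨some none, h⟩
  d₂_apply_eq_zero := by
    rintro ⟨x, p, q⟩ v hv
    rw [Finset.mem_insert, not_or] at hv
    have hva : v ≠ C.src i := fun h => hv.2 (h ▸ ha)
    have hvb : v ≠ C.tgt i := fun h => hv.2 (h ▸ hb)
    simp [attachTriangleD₂_apply, C.d₂_apply_eq_zero x v hv.2,
      edgeBoundary_apply_of_ne g hva hv.1, edgeBoundary_apply_of_ne g hvb hv.1]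
  vertexBoundary_d₂ := by
    rintro ⟨x, p, q⟩
    simp [attachTriangleD₂_apply, C.vertexBoundary_d₂, vertexBoundary_edgeBoundary g hac,
      vertexBoundary_edgeBoundary g hbc]
  d₃_injective := (injective_iff_map_eq_zero _).2 fun ⟨w, t⟩ h => by
    rw [attachTriangleD₃_apply, Prod.mk_eq_zero, Prod.mk_eq_zero] at h
    have ht : t = 0 := eq_zero_of_mul_subOne_eq_zero hχ h.2.2
    have hw := h.1
    rw [ht, zero_mul, zero_smul, add_zero] at hw
    rw [ht, (map_eq_zero_iff _ C.d₃_injective).1 hw, Prod.mk_zero_zero]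
  exact x := by
    constructor
    · obtain ⟨x, p, q⟩ := x
      intro h
      have hca : C.src i ≠ c := fun h => hc (h ▸ ha)
      have hcb : C.tgt i ≠ c := fun h => hc (h ▸ hb)
      have hpq : p * subOne (g (C.src i)) + q * subOne (g (C.tgt i)) = 0 := by
        rw [attachTriangleD₂_apply] at h
        simpa [C.d₂_apply_eq_zero x c hc, edgeBoundary_apply_right g hca,
          edgeBoundary_apply_right g hcb] using DFunLike.congr_fun h c
      obtain ⟨t, hq, hp⟩ := exists_of_mul_subOne_eq (x := q) (y := -p) hab hχ hω hω'
        (by rw [neg_mul, eq_neg_iff_add_eq_zero, add_comm, hpq])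
      have h₁ : C.d₂ (x - (t * subOne (g c)) • C.e i) = 0 := by
        have h₂ := C.attachTriangleD₂_d₃ i c hab hac hbc (0, t)
        rw [attachTriangleD₃_apply, ← hp, ← hq, neg_neg, attachTriangleD₂_apply, map_zero,
          zero_add] at h₂
        rw [attachTriangleD₂_apply, ← h₂] at h
        rw [map_sub, sub_eq_zero]
        exact add_right_cancel h
      obtain ⟨w, hw⟩ := (C.exact _).1 h₁
      exact ⟨(w, t), by rw [attachTriangleD₃_apply, hw, ← hp, ← hq, neg_neg, sub_add_cancel]⟩
    · rintro ⟨w, rfl⟩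
      exact C.attachTriangleD₂_d₃ i c hab hac hbc w
  torsion T F hF := C.attachTriangle_torsion i ha hb hc hab hac hbc hχ hω hω' hν hνa hνb T F hF

end SalvettiComplex

end AttachTriangle

section Built

variable {π}

/-- The elements `g v`, for `v` in `S`, have dual homomorphisms to the integers. -/
def HasDualCharacters (S : Finset ℕ) (g : ℕ → π) : Prop :=
  ∀ v ∈ S, ∃ χ : π →* Multiplicative ℤ, χ (g v) = Multiplicative.ofAdd 1 ∧ ∀ w ≠ v, χ (g w) = 1

lemma SalvettiComplex.nonempty_attachTriangle {S : Finset ℕ} {Γ : SimpleGraph ℕ} {g : ℕ → π}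
    (C : SalvettiComplex S Γ g) {a b c : ℕ} (ha : a ∈ S) (hb : b ∈ S) (hadj : Γ.Adj a b)
    (hc : c ∉ S) (hab : Commute (g a) (g b)) (hac : Commute (g a) (g c))
    (hbc : Commute (g b) (g c)) (hχ : HasDualCharacters (insert c S) g) :
    Nonempty (SalvettiComplex (insert c S)
      (Γ ⊔ SimpleGraph.fromEdgeSet {s(a, c), s(b, c)}) g) := by
  have hca : a ≠ c := fun h => hc (h ▸ ha)
  have hcb : b ≠ c := fun h => hc (h ▸ hb)
  obtain ⟨χ, hχa, hχ'⟩ := hχ a (mem_insert_of_mem ha)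
  obtain ⟨ω, hωb, hω'⟩ := hχ b (mem_insert_of_mem hb)
  obtain ⟨ν, hνc, hν'⟩ := hχ c (mem_insert_self _ _)
  obtain ⟨i, ⟨rfl, rfl⟩ | ⟨rfl, rfl⟩⟩ := C.exists_edge a b hadj
  · exact ⟨C.attachTriangle i ha hb hc hab hac hbc hχa hωb (hω' _ hadj.ne) hνc (hν' _ hca)
      (hν' _ hcb)⟩
  · rw [Set.pair_comm]
    exact ⟨C.attachTriangle i hb ha hc hab.symm hbc hac hωb hχa (hχ' _ hadj.ne') hνc (hν' _ hcb)
      (hν' _ hca)⟩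

lemma HasDualCharacters.mono {S S' : Finset ℕ} {g : ℕ → π} (h : HasDualCharacters S' g)
    (hS : S ⊆ S') : HasDualCharacters S g := fun v hv => h v (hS hv)

lemma BuiltGraph.nonempty_salvettiComplex {S : Finset ℕ} {Γ : SimpleGraph ℕ}
    (h : BuiltGraph S Γ) (g : ℕ → π) (hg : ∀ u v, Γ.Adj u v → Commute (g u) (g v))
    (hχ : HasDualCharacters S g) : Nonempty (SalvettiComplex S Γ g) := by
  induction h with
  | single v => exact ⟨SalvettiComplex.single v⟩
  | attachEdgeAtVertex S Γ _ a b ha hb ih =>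
    have hne : a ≠ b := fun h => hb (h ▸ ha)
    obtain ⟨C⟩ := ih (fun u v h => hg u v (Or.inl h)) (hχ.mono (subset_insert _ _))
    obtain ⟨χ, hχa, -⟩ := hχ a (mem_insert_of_mem ha)
    exact ⟨C.attachEdge ha hb (hg a b (by simp [hne])) hχa⟩
  | attachTriangleAtVertex S Γ _ a b c ha hb hc hbc ih =>
    have hab : a ≠ b := fun h => hb (h ▸ ha)
    have hac : a ≠ c := fun h => hc (h ▸ ha)
    obtain ⟨C⟩ := ih (fun u v h => hg u v (Or.inl h))
      (hχ.mono ((subset_insert _ _).trans (subset_insert _ _)))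
    obtain ⟨χ, hχa, -⟩ := hχ a (mem_insert_of_mem (mem_insert_of_mem ha))
    have hgab := hg a b (by simp [hab])
    rw [insert_comm] at hχ ⊢
    have hΓ : Γ ⊔ SimpleGraph.fromEdgeSet {s(a, b), s(a, c), s(b, c)} =
        Γ ⊔ SimpleGraph.fromEdgeSet {s(a, b)} ⊔ SimpleGraph.fromEdgeSet {s(a, c), s(b, c)} := by
      rw [sup_assoc, ← SimpleGraph.fromEdgeSet_union, Set.singleton_union]
    rw [hΓ]
    exact (C.attachEdge ha hb hgab hχa).nonempty_attachTriangle (mem_insert_of_mem ha)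
      (mem_insert_self _ _) (by simp [hab]) (by simp [hc, hbc.symm]) hgab
      (hg a c (by simp [hac])) (hg b c (by simp [hbc])) hχ
  | attachTriangleAtEdge S Γ _ a b c ha hb hab hc ih =>
    have hca : a ≠ c := fun h => hc (h ▸ ha)
    have hcb : b ≠ c := fun h => hc (h ▸ hb)
    obtain ⟨C⟩ := ih (fun u v h => hg u v (Or.inl h)) (hχ.mono (subset_insert _ _))
    exact C.nonempty_attachTriangle ha hb hab hc (hg a b (Or.inl hab)) (hg a c (by simp [hca]))
      (hg b c (by simp [hcb])) hχ

end Built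

section LowDegrees

variable {π}

/-- The elements `g v`, for `v` in `S`, are the standard generators of the right-angled Artin group
of the restriction of `Γ` to `S`. -/
structure IsRAAGBasis (S : Finset ℕ) (Γ : SimpleGraph ℕ) (g : ℕ → π) : Prop where
  closure_eq_top : Subgroup.closure (g '' S) = ⊤
  exists_hom : ∀ (H : Type) [Group H] (f : ℕ → H),
    (∀ u ∈ S, ∀ v ∈ S, Γ.Adj u v → Commute (f u) (f v)) → ∃ φ : π →* H, ∀ v ∈ S, φ (g v) = f v
  commute : ∀ u v, Γ.Adj u v → Commute (g u) (g v)
  eq_one : ∀ v ∉ S, g v = 1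

lemma RAAGroup.closure_range_of (V : Type) (Γ : SimpleGraph V) :
    Subgroup.closure (Set.range (RAAGroup.of : V → RAAGroup V Γ)) = ⊤ :=
  PresentedGroup.closure_range_of (raagRels V Γ)

lemma RAAGroup.exists_hom {V : Type} {Γ : SimpleGraph V} {H : Type} [Group H] (f : V → H)
    (hf : ∀ u v, Γ.Adj u v → Commute (f u) (f v)) :
    ∃ φ : RAAGroup V Γ →* H, ∀ v, φ (RAAGroup.of v) = f v := by
  have h : ∀ r ∈ raagRels V Γ, FreeGroup.lift f r = 1 := by
    rintro _ ⟨u, v, huv, rfl⟩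
    simp [(hf u v huv).eq]
  exact ⟨PresentedGroup.toGroup h, fun _ => PresentedGroup.toGroup.of h⟩

lemma RAAGroup.commute_of {V : Type} {Γ : SimpleGraph V} {u v : V} (huv : Γ.Adj u v) :
    Commute (RAAGroup.of u : RAAGroup V Γ) (RAAGroup.of v) := by
  have h : PresentedGroup.mk (raagRels V Γ) (FreeGroup.of u * FreeGroup.of v *
      (FreeGroup.of u)⁻¹ * (FreeGroup.of v)⁻¹) = 1 :=
    PresentedGroup.one_of_mem ⟨u, v, huv, rfl⟩
  simp only [map_mul, map_inv] at h
  exact commutatorElement_eq_one_iff_commute.1 h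

open Classical in
lemma exists_isRAAGBasis (S : Finset ℕ) (Γ : SimpleGraph ℕ) :
    ∃ g : ℕ → RAAGroup ↑(↑S : Set ℕ) (Γ.induce ↑S), IsRAAGBasis S Γ g := by
  let g : ℕ → RAAGroup ↑(↑S : Set ℕ) (Γ.induce ↑S) :=
    fun v => if h : v ∈ (↑S : Set ℕ) then RAAGroup.of ⟨v, h⟩ else 1
  have hg : ∀ v : ↑(↑S : Set ℕ), g v = RAAGroup.of v := fun v => dif_pos v.2
  have hg' : ∀ v ∉ S, g v = 1 := fun v hv => dif_neg hv
  refine ⟨g, ?_, fun H _ f hf => ?_, fun u v huv => ?_, hg'⟩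
  · have : g '' S = Set.range RAAGroup.of := by
      ext x
      constructor
      · rintro ⟨v, hv, rfl⟩
        exact ⟨⟨v, hv⟩, (hg ⟨v, hv⟩).symm⟩
      · rintro ⟨v, rfl⟩
        exact ⟨v, v.2, hg v⟩
    rw [this, RAAGroup.closure_range_of]
  · obtain ⟨φ, hφ⟩ := RAAGroup.exists_hom (Γ := Γ.induce ↑S) (fun v : ↑(↑S : Set ℕ) => f v)
      fun u v huv => hf u u.2 v v.2 huv
    exact ⟨φ, fun v hv => by rw [hg ⟨v, hv⟩, hφ]⟩
  · by_cases hu : u ∈ S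
    · by_cases hv : v ∈ S
      · rw [hg ⟨u, hu⟩, hg ⟨v, hv⟩]
        exact RAAGroup.commute_of huv
      · rw [hg' v hv]
        exact Commute.one_right _
    · rw [hg' u hu]
      exact Commute.one_left _

namespace IsRAAGBasis

variable {S : Finset ℕ} {Γ : SimpleGraph ℕ} {g : ℕ → π}

lemma hasDualCharacters (hg : IsRAAGBasis S Γ g) : HasDualCharacters S g := fun v hv => by
  obtain ⟨χ, hχ⟩ := hg.exists_hom (Multiplicative ℤ)
    (fun w => if w = v then Multiplicative.ofAdd 1 else 1) fun _ _ _ _ _ => Commute.all _ _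
  refine ⟨χ, by simpa using hχ v hv, fun w hw => ?_⟩
  by_cases hw' : w ∈ S
  · simpa [hw] using hχ w hw'
  · rw [hg.eq_one w hw', map_one]

lemma induction (hg : IsRAAGBasis S Γ g) {p : π → Prop} (h : ∀ v ∈ S, p (g v)) (one : p 1)
    (mul : ∀ x y, p x → p y → p (x * y)) (inv : ∀ x, p x → p x⁻¹) (x : π) : p x := by
  have hx : x ∈ Subgroup.closure (g '' S) := hg.closure_eq_top ▸ Subgroup.mem_top x
  induction hx using Subgroup.closure_induction with
  | mem x hx =>
    obtain ⟨v, hv, rfl⟩ := hx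
    exact h v hv
  | one => exact one
  | mul x y _ _ hx hy => exact mul x y hx hy
  | inv x _ hx => exact inv x hx

lemma exists_vertexBoundary_eq (hg : IsRAAGBasis S Γ g) (h : π) :
    ∃ x : ℕ →₀ GroupRing π, (∀ v ∉ S, x v = 0) ∧ vertexBoundary g x = subOne h := by
  refine hg.induction (p := fun h => ∃ x : ℕ →₀ GroupRing π, (∀ v ∉ S, x v = 0) ∧
    vertexBoundary g x = subOne h) (fun v hv => ⟨Finsupp.single v 1, fun w hw => ?_, ?_⟩)
    ⟨0, by simp, by simp [subOne, MonoidAlgebra.one_def]⟩ ?_ ?_ h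
  · exact Finsupp.single_eq_of_ne (fun h => hw (h ▸ hv))
  · simp [vertexBoundary]
  · rintro a b ⟨x, hx, hxa⟩ ⟨y, hy, hyb⟩
    refine ⟨MonoidAlgebra.single a (1 : ℤ) • y + x, fun v hv => by simp [hx v hv, hy v hv], ?_⟩
    rw [map_add, map_smul, hxa, hyb]
    simp [subOne, mul_sub, MonoidAlgebra.single_mul_single]
  · rintro a ⟨x, hx, hxa⟩
    refine ⟨-(MonoidAlgebra.single a⁻¹ (1 : ℤ) • x), fun v hv => by simp [hx v hv], ?_⟩
    rw [map_neg, map_smul, hxa]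
    simp [subOne, mul_sub, MonoidAlgebra.single_mul_single, MonoidAlgebra.one_def]

lemma exists_d₂_eq (hg : IsRAAGBasis S Γ g) (C : SalvettiComplex S Γ g) (x : ℕ →₀ GroupRing π)
    (hx : ∀ v ∉ S, x v = 0) (hx' : vertexBoundary g x = 0) : ∃ y, C.d₂ y = x := by
  let q := (LinearMap.range C.d₂).mkQ
  let f : ℕ → Equiv.Perm ((ℕ →₀ GroupRing π) ⧸ LinearMap.range C.d₂) := fun v =>
    { toFun := fun m => MonoidAlgebra.single (g v) (1 : ℤ) • m + q (Finsupp.single v 1)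
      invFun := fun m => MonoidAlgebra.single (g v)⁻¹ (1 : ℤ) • (m - q (Finsupp.single v 1))
      left_inv := fun m => by
        beta_reduce
        rw [add_sub_cancel_right, ← mul_smul, MonoidAlgebra.single_mul_single, inv_mul_cancel,
          one_mul, ← MonoidAlgebra.one_def, one_smul]
      right_inv := fun m => by
        beta_reduce
        rw [← mul_smul, MonoidAlgebra.single_mul_single, mul_inv_cancel,
          one_mul, ← MonoidAlgebra.one_def, one_smul, sub_add_cancel] }
  have f_apply : ∀ v m, f v m = MonoidAlgebra.single (g v) (1 : ℤ) • m + q (Finsupp.single v 1) :=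
    fun _ _ => rfl
  have hedge : ∀ i, q (edgeBoundary g (C.src i) (C.tgt i)) = 0 := fun i =>
    (Submodule.Quotient.mk_eq_zero _).2 ⟨C.e i, C.d₂_e i⟩
  have hedge' : ∀ u v, q (edgeBoundary g u v) =
      subOne (g u) • q (Finsupp.single v 1) - subOne (g v) • q (Finsupp.single u 1) :=
    fun u v => by
      rw [← map_smul, ← map_smul, ← map_sub, Finsupp.smul_single, Finsupp.smul_single, smul_eq_mul,
        smul_eq_mul, mul_one, mul_one, edgeBoundary]
  have hadj : ∀ u v, Γ.Adj u v →
      subOne (g u) • q (Finsupp.single v 1) = subOne (g v) • q (Finsupp.single u 1) :=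
    fun u v huv => by
      obtain ⟨i, ⟨rfl, rfl⟩ | ⟨rfl, rfl⟩⟩ := C.exists_edge u v huv
      · rw [← sub_eq_zero, ← hedge', hedge]
      · rw [eq_comm, ← sub_eq_zero, ← hedge', hedge]
  obtain ⟨A, hA⟩ := hg.exists_hom _ f fun u _ v _ huv => Equiv.ext fun m => by
    have h := hadj u v huv
    simp only [subOne, sub_smul, one_smul] at h
    rw [sub_eq_sub_iff_add_eq_add] at h
    simp only [Equiv.Perm.mul_apply, f_apply, smul_add, ← mul_smul,
      MonoidAlgebra.single_mul_single, (hg.commute u v huv).eq, add_assoc, one_mul, h]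
  have hAm : ∀ h m, A h m = MonoidAlgebra.single h (1 : ℤ) • m + A h 0 := by
    refine hg.induction (fun v hv m => ?_) (fun m => ?_) (fun a b ha hb m => ?_)
      (fun a ha m => ?_)
    · rw [hA v hv, f_apply, f_apply, smul_zero, zero_add]
    · rw [map_one, ← MonoidAlgebra.one_def, one_smul]
      simp
    · rw [map_mul, Equiv.Perm.mul_apply, Equiv.Perm.mul_apply, ha, hb, ha (A b 0), smul_add,
        ← mul_smul, MonoidAlgebra.single_mul_single, one_mul, add_assoc]
    · rw [map_inv, Equiv.Perm.inv_eq_iff_eq, ha, smul_add, ← mul_smul,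
        MonoidAlgebra.single_mul_single, mul_inv_cancel, one_mul, ← MonoidAlgebra.one_def,
        one_smul, add_assoc, ← ha, ← Equiv.Perm.mul_apply, mul_inv_cancel, Equiv.Perm.one_apply,
        add_zero]
  let D : GroupRing π →+ (ℕ →₀ GroupRing π) ⧸ LinearMap.range C.d₂ :=
    (Finsupp.liftAddHom fun h : π => zmultiplesHom _ (A h 0)).comp
      MonoidAlgebra.coeffAddEquiv.toAddMonoidHom
  have hD : ∀ h c, D (MonoidAlgebra.single h c) = c • A h 0 := fun h c => by simp [D]
  have hDv : ∀ v ∈ S, ∀ r, D (r * subOne (g v)) = r • q (Finsupp.single v 1) := fun v hv r => by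
    induction r using MonoidAlgebra.induction_linear with
    | zero => simp
    | add r s hr hs => rw [add_mul, map_add, hr, hs, add_smul]
    | single h c =>
      have h₁ : A (g v) 0 = q (Finsupp.single v 1) := by rw [hA v hv, f_apply, smul_zero, zero_add]
      have h₂ : MonoidAlgebra.single h c = c • MonoidAlgebra.single h (1 : ℤ) := by simp
      rw [subOne, mul_sub, mul_one, MonoidAlgebra.single_mul_single, mul_one, map_sub, hD, hD,
        map_mul, Equiv.Perm.mul_apply, hAm, h₁, smul_add, add_sub_cancel_right, h₂, smul_assoc]
  have hDx : D (vertexBoundary g x) = q x := by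
    conv_rhs => rw [← Finsupp.sum_single x]
    rw [vertexBoundary, Finsupp.linearCombination_apply, map_finsuppSum, map_finsuppSum]
    refine Finsupp.sum_congr fun v hv => ?_
    have hvS : v ∈ S := by_contra fun h => Finsupp.mem_support_iff.1 hv (hx v h)
    rw [smul_eq_mul, hDv v hvS, ← map_smul, Finsupp.smul_single, smul_eq_mul, mul_one]
  rw [hx', map_zero] at hDx
  exact (Submodule.Quotient.mk_eq_zero _).1 hDx.symm

end IsRAAGBasis

end LowDegrees

section Comparison

variable {π}

lemma exists_linear_lift {R P A B : Type*} [Ring R] [AddCommGroup P] [AddCommGroup A]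
    [AddCommGroup B] [Module R P] [Module R A] [Module R B] [Module.Projective R P]
    (f : A →ₗ[R] B) (u : P →ₗ[R] B) (h : ∀ x, ∃ a, f a = u x) :
    ∃ v : P →ₗ[R] A, ∀ x, f (v x) = u x := by
  obtain ⟨v, hv⟩ := Module.projective_lifting_property f.rangeRestrict
    (u.codRestrict (LinearMap.range f) h) f.surjective_rangeRestrict
  exact ⟨v, fun x => congrArg Subtype.val (LinearMap.congr_fun hv x)⟩

/-- The bar resolution is a retract up to homotopy of the complex `C` in degrees two and three. -/
structure BarComparison {S : Finset ℕ} {Γ : SimpleGraph ℕ} {g : ℕ → π}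
    (C : SalvettiComplex S Γ g) where
  ψ₁ : BarModule π 1 →ₗ[GroupRing π] (ℕ →₀ GroupRing π)
  ψ₂ : BarModule π 2 →ₗ[GroupRing π] C.P₂
  ψ₃ : BarModule π 3 →ₗ[GroupRing π] C.P₃
  φ₂ : C.P₂ →ₗ[GroupRing π] BarModule π 2
  φ₃ : C.P₃ →ₗ[GroupRing π] BarModule π 3
  h₁ : BarModule π 1 →ₗ[GroupRing π] BarModule π 2
  h₂ : BarModule π 2 →ₗ[GroupRing π] BarModule π 3
  h₃ : BarModule π 3 →ₗ[GroupRing π] BarModule π 4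
  d₂_ψ₂ : ∀ x, C.d₂ (ψ₂ x) = ψ₁ (barD π 1 x)
  d₃_ψ₃ : ∀ x, C.d₃ (ψ₃ x) = ψ₂ (barD π 2 x)
  ψ₃_barD : ∀ x, ψ₃ (barD π 3 x) = 0
  barD_φ₃ : ∀ x, barD π 2 (φ₃ x) = φ₂ (C.d₃ x)
  barD_h₂ : ∀ x, barD π 2 (h₂ x) = x - φ₂ (ψ₂ x) - h₁ (barD π 1 x)
  barD_h₃ : ∀ x, barD π 3 (h₃ x) = x - φ₃ (ψ₃ x) - h₂ (barD π 2 x)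

lemma barD_zero_apply_default (g : Fin 1 → π) :
    barD π 0 (Finsupp.single g 1) default = subOne (g 0) := by
  rw [MonoidAlgebra.one_def, barD_single, Subsingleton.elim (fun i : Fin 0 => g i.succ) default,
    Fin.sum_univ_one, Subsingleton.elim (Fin.contractNth 0 _ g) default]
  simp [subOne, sub_eq_add_neg, MonoidAlgebra.one_def]

lemma IsRAAGBasis.nonempty_barComparison {S : Finset ℕ} {Γ : SimpleGraph ℕ} {g : ℕ → π}
    (hg : IsRAAGBasis S Γ g) (C : SalvettiComplex S Γ g) : Nonempty (BarComparison C) := by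
  choose γ hγ hγ' using hg.exists_vertexBoundary_eq
  let ψ₁ : BarModule π 1 →ₗ[GroupRing π] (ℕ →₀ GroupRing π) :=
    Finsupp.linearCombination _ fun u => γ (u 0)
  let φ₁ : (ℕ →₀ GroupRing π) →ₗ[GroupRing π] BarModule π 1 :=
    Finsupp.linearCombination _ fun v => Finsupp.single (fun _ => g v) 1
  have hψ₁ : ∀ x, vertexBoundary g (ψ₁ x) = barD π 0 x default := fun x => by
    suffices h : (vertexBoundary g).comp ψ₁ = (Finsupp.lapply default).comp (barD π 0) from
      LinearMap.congr_fun h x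
    refine Finsupp.lhom_ext' fun u => LinearMap.ext_ring ?_
    simp [ψ₁, hγ', barD_zero_apply_default]
  have hψ₁' : ∀ x, ∀ v ∉ S, ψ₁ x v = 0 := fun x v hv => by
    simp [ψ₁, Finsupp.linearCombination_apply, Finsupp.sum, hγ _ v hv]
  have hφ₁ : ∀ x, barD π 0 (φ₁ x) default = vertexBoundary g x := fun x => by
    suffices h : ((Finsupp.lapply default).comp (barD π 0)).comp φ₁ = vertexBoundary g from
      LinearMap.congr_fun h x
    refine Finsupp.lhom_ext' fun u => LinearMap.ext_ring ?_
    simp [φ₁, vertexBoundary, barD_zero_apply_default]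
  have eq_zero : ∀ x : BarModule π 0, x default = 0 → x = 0 := fun x hx =>
    Finsupp.ext fun u => by rw [Subsingleton.elim u default, hx]; rfl
  obtain ⟨ψ₂, hψ₂⟩ := exists_linear_lift C.d₂ (ψ₁.comp (barD π 1)) fun x =>
    hg.exists_d₂_eq C _ (hψ₁' _) (by rw [LinearMap.comp_apply, hψ₁, barD_comp_barD]; rfl)
  simp only [LinearMap.comp_apply] at hψ₂
  obtain ⟨ψ₃, hψ₃⟩ := exists_linear_lift C.d₃ (ψ₂.comp (barD π 2)) fun x =>
    (C.exact _).1 (by rw [LinearMap.comp_apply, hψ₂, barD_comp_barD, map_zero])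
  simp only [LinearMap.comp_apply] at hψ₃
  obtain ⟨φ₂, hφ₂⟩ := exists_linear_lift (barD π 1) (φ₁.comp C.d₂) fun x =>
    exists_barD_eq 0 _ (eq_zero _ (by rw [LinearMap.comp_apply, hφ₁, C.vertexBoundary_d₂]))
  simp only [LinearMap.comp_apply] at hφ₂
  obtain ⟨φ₃, hφ₃⟩ := exists_linear_lift (barD π 2) (φ₂.comp C.d₃) fun x =>
    exists_barD_eq 1 _ (by rw [LinearMap.comp_apply, hφ₂, C.d₂_d₃, map_zero])
  obtain ⟨h₁, hh₁⟩ := exists_linear_lift (barD π 1) (LinearMap.id - φ₁.comp ψ₁) fun x =>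
    exists_barD_eq 0 _ (eq_zero _ (by simp [hφ₁, hψ₁]))
  obtain ⟨h₂, hh₂⟩ := exists_linear_lift (barD π 2)
    (LinearMap.id - φ₂.comp ψ₂ - h₁.comp (barD π 1)) fun x =>
    exists_barD_eq 1 _ (by simp [hφ₂, hψ₂, hh₁])
  obtain ⟨h₃, hh₃⟩ := exists_linear_lift (barD π 3)
    (LinearMap.id - φ₃.comp ψ₃ - h₂.comp (barD π 2)) fun x =>
    exists_barD_eq 2 _ (by simp [hφ₃, hψ₃, hh₂, barD_comp_barD])
  exact ⟨⟨ψ₁, ψ₂, ψ₃, φ₂, φ₃, h₁, h₂, h₃, hψ₂, hψ₃, fun x => C.d₃_injective (by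
    rw [hψ₃, barD_comp_barD, map_zero, map_zero]), hφ₃, hh₂, hh₃⟩⟩

end Comparison

section Dual

variable {π} {P : Type} [AddCommGroup P] [Module (GroupRing π) P] [Module.Free (GroupRing π) P]

lemma exists_eq_eval [Module.Finite (GroupRing π) P]
    (Φ : (P →ₗ[GroupRing π] GroupRing π) →ₗ[(GroupRing π)ᵐᵒᵖ] GroupRing π) :
    ∃ x, ∀ z, Φ z = z x := by
  let b := Module.Free.chooseBasis (GroupRing π) P
  refine ⟨∑ i, Φ (b.coord i) • b i, fun z => ?_⟩
  have hz : z = ∑ i, MulOpposite.op (z (b i)) • b.coord i := by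
    refine b.ext fun j => ?_
    classical
    simp [LinearMap.sum_apply, Finsupp.single_apply]
  conv_lhs => rw [hz]
  simp [map_sum]

lemma eq_zero_of_forall_dual {x : P} (h : ∀ z : P →ₗ[GroupRing π] GroupRing π, z x = 0) :
    x = 0 :=
  (Module.Free.chooseBasis (GroupRing π) P).ext_elem fun i =>
    (h ((Module.Free.chooseBasis (GroupRing π) P).coord i)).trans (by simp)

lemma projective_dual [Module.Finite (GroupRing π) P] :
    Module.Projective (GroupRing π)ᵐᵒᵖ (P →ₗ[GroupRing π] GroupRing π) := by
  have e : (GroupRing π)ᵐᵒᵖ ≃ₗ[(GroupRing π)ᵐᵒᵖ] GroupRing π :=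
    { (MulOpposite.opAddEquiv (α := GroupRing π)).symm with map_smul' := fun _ _ => rfl }
  have : Module.Free (GroupRing π)ᵐᵒᵖ (GroupRing π) := Module.Free.of_equiv e
  have := Module.Free.of_equiv
    ((Module.Free.chooseBasis (GroupRing π) P).constr (GroupRing π)ᵐᵒᵖ (M' := GroupRing π))
  infer_instance

end Dual

section Cohomology

variable {π}

/-- The cochain defined by a functional on the bar resolution. -/
noncomputable def barEval (n : ℕ) : (BarModule π n →ₗ[GroupRing π] GroupRing π)
    →ₗ[(GroupRing π)ᵐᵒᵖ] ((Fin n → π) → GroupRing π) where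
  toFun L u := L (Finsupp.single u 1)
  map_add' _ _ := rfl
  map_smul' _ _ := rfl

lemma barEval_surjective (n : ℕ) : Function.Surjective (barEval (π := π) n) := fun f =>
  ⟨Finsupp.linearCombination _ f, funext fun u => by simp [barEval]⟩

lemma cochainDOp_barEval (n : ℕ) (L : BarModule π n →ₗ[GroupRing π] GroupRing π) :
    cochainDOp π n (barEval n L) = barEval (n + 1) (precomp (barD π n) L) :=
  funext fun u => cochainD_eq n L u

lemma barEval_injective (n : ℕ) : Function.Injective (barEval (π := π) n) := fun _ _ h =>
  Finsupp.lhom_ext' fun u => LinearMap.ext_ring (congrFun h u)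

lemma barEval_mem_cocyclesΛ_iff {n : ℕ} {L : BarModule π n →ₗ[GroupRing π] GroupRing π} :
    barEval n L ∈ cocyclesΛ π n ↔ ∀ x, L (barD π n x) = 0 := by
  rw [cocyclesΛ, LinearMap.mem_ker, cochainDOp_barEval, map_eq_zero_iff _ (barEval_injective _),
    LinearMap.ext_iff]
  rfl

lemma barEval_mem_coboundariesΛ_iff {n : ℕ}
    {L : BarModule π (n + 1) →ₗ[GroupRing π] GroupRing π} :
    barEval (n + 1) L ∈ coboundariesΛ π (n + 1) ↔
      ∃ K : BarModule π n →ₗ[GroupRing π] GroupRing π, ∀ x, L x = K (barD π n x) := by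
  rw [coboundariesΛ, LinearMap.mem_range, (barEval_surjective n).exists]
  refine exists_congr fun K => ?_
  rw [cochainDOp_barEval, (barEval_injective _).eq_iff, LinearMap.ext_iff]
  exact forall_congr' fun x => eq_comm

/-- The map to cohomology induced by a family of cocycles on the bar resolution. -/
noncomputable def cohMap {n : ℕ} {Z : Type} [AddCommGroup Z] [Module (GroupRing π)ᵐᵒᵖ Z]
    (α : Z →ₗ[(GroupRing π)ᵐᵒᵖ] (BarModule π n →ₗ[GroupRing π] GroupRing π))
    (hα : ∀ z x, α z (barD π n x) = 0) : Z →ₗ[(GroupRing π)ᵐᵒᵖ] groupCohΛ π n :=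
  ((coboundariesΛ π n).comap (cocyclesΛ π n).subtype).mkQ.comp
    (((barEval n).comp α).codRestrict _ fun z => barEval_mem_cocyclesΛ_iff.2 (hα z))

lemma cohMap_eq_zero_iff {n : ℕ} {Z : Type} [AddCommGroup Z] [Module (GroupRing π)ᵐᵒᵖ Z]
    (α : Z →ₗ[(GroupRing π)ᵐᵒᵖ] (BarModule π (n + 1) →ₗ[GroupRing π] GroupRing π))
    (hα : ∀ z x, α z (barD π (n + 1) x) = 0) (z : Z) : cohMap α hα z = 0 ↔
      ∃ K : BarModule π n →ₗ[GroupRing π] GroupRing π, ∀ x, α z x = K (barD π n x) :=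
  (Submodule.Quotient.mk_eq_zero _).trans barEval_mem_coboundariesΛ_iff

lemma cohMap_surjective {n : ℕ} {Z : Type} [AddCommGroup Z] [Module (GroupRing π)ᵐᵒᵖ Z]
    (α : Z →ₗ[(GroupRing π)ᵐᵒᵖ] (BarModule π (n + 1) →ₗ[GroupRing π] GroupRing π))
    (hα : ∀ z x, α z (barD π (n + 1) x) = 0)
    (h : ∀ L : BarModule π (n + 1) →ₗ[GroupRing π] GroupRing π, (∀ x, L (barD π (n + 1) x) = 0) →
      ∃ z, ∃ K : BarModule π n →ₗ[GroupRing π] GroupRing π, ∀ x, α z x - L x = K (barD π n x)) :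
    Function.Surjective (cohMap α hα) := by
  intro c
  obtain ⟨⟨f, hf⟩, rfl⟩ := Submodule.Quotient.mk_surjective _ c
  obtain ⟨L, rfl⟩ := barEval_surjective _ f
  obtain ⟨z, K, hK⟩ := h L (barEval_mem_cocyclesΛ_iff.1 hf)
  refine ⟨z, (Submodule.Quotient.eq _).2 ?_⟩
  exact barEval_mem_coboundariesΛ_iff (L := α z - L).2 ⟨K, hK⟩

namespace BarComparison

variable {S : Finset ℕ} {Γ : SimpleGraph ℕ} {g : ℕ → π} {C : SalvettiComplex S Γ g}

/-- The map from cocycles of `C` to the second cohomology. -/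
noncomputable def cohMapTwo (B : BarComparison C) :
    constrainedCocycles C.d₃ C.e (g ∘ C.src) (g ∘ C.tgt) ∅ →ₗ[(GroupRing π)ᵐᵒᵖ] groupCohΛ π 2 :=
  cohMap (Z := constrainedCocycles C.d₃ C.e (g ∘ C.src) (g ∘ C.tgt) ∅)
    ((precomp B.ψ₂).comp (Submodule.subtype _)) fun z x =>
    (congrArg z.1 (B.d₃_ψ₃ x)).symm.trans (z.2.1 _)

lemma cohMapTwo_precomp_d₂ (B : BarComparison C)
    (y : (ℕ →₀ GroupRing π) →ₗ[GroupRing π] GroupRing π)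
    (h : precomp C.d₂ y ∈ constrainedCocycles C.d₃ C.e (g ∘ C.src) (g ∘ C.tgt) ∅) :
    B.cohMapTwo ⟨precomp C.d₂ y, h⟩ = 0 :=
  (cohMap_eq_zero_iff (Z := constrainedCocycles C.d₃ C.e (g ∘ C.src) (g ∘ C.tgt) ∅) _ _ _).2
    ⟨y.comp B.ψ₁, fun x => congrArg y (B.d₂_ψ₂ x)⟩

lemma cohMapTwo_surjective (B : BarComparison C) : Function.Surjective B.cohMapTwo := by
  refine cohMap_surjective (Z := constrainedCocycles C.d₃ C.e (g ∘ C.src) (g ∘ C.tgt) ∅) _ _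
    fun L hL => ?_
  have hz : precomp B.φ₂ L ∈ constrainedCocycles C.d₃ C.e (g ∘ C.src) (g ∘ C.tgt) ∅ :=
    ⟨fun w => by rw [precomp_apply, ← B.barD_φ₃, hL], fun _ h => h.elim⟩
  refine ⟨⟨_, hz⟩, -(L.comp B.h₁), fun x => ?_⟩
  change L (B.φ₂ (B.ψ₂ x)) - L x = -L (B.h₁ (barD π 1 x))
  have := congrArg L (B.barD_h₂ x)
  rw [hL, map_sub, map_sub] at this
  rw [eq_neg_iff_add_eq_zero, ← neg_eq_zero, this]
  abel

lemma hom_groupCohΛ_two_eq_zero (B : BarComparison C)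
    (F : groupCohΛ π 2 →ₗ[(GroupRing π)ᵐᵒᵖ] GroupRing π) : F = 0 := by
  have hF : F.comp B.cohMapTwo = 0 := C.torsion _ _ fun y h =>
    (congrArg F (B.cohMapTwo_precomp_d₂ y h)).trans (map_zero F)
  refine LinearMap.ext fun c => ?_
  obtain ⟨z, rfl⟩ := B.cohMapTwo_surjective c
  exact LinearMap.congr_fun hF z

/-- The presentation of the third cohomology by the dual of `C.P₃`. -/
noncomputable def cohMapThree (B : BarComparison C) :
    (C.P₃ →ₗ[GroupRing π] GroupRing π) →ₗ[(GroupRing π)ᵐᵒᵖ] groupCohΛ π 3 :=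
  cohMap (precomp B.ψ₃) fun z x => by rw [precomp_apply, B.ψ₃_barD, map_zero]

lemma cohMapThree_eq_zero_iff (B : BarComparison C) (z : C.P₃ →ₗ[GroupRing π] GroupRing π) :
    B.cohMapThree z = 0 ↔
      ∃ K : BarModule π 2 →ₗ[GroupRing π] GroupRing π, ∀ x, z (B.ψ₃ x) = K (barD π 2 x) :=
  cohMap_eq_zero_iff _ _ z

lemma cohMapThree_precomp_d₃ (B : BarComparison C) (y : C.P₂ →ₗ[GroupRing π] GroupRing π) :
    B.cohMapThree (precomp C.d₃ y) = 0 :=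
  (B.cohMapThree_eq_zero_iff _).2 ⟨y.comp B.ψ₂, fun x => by
    rw [precomp_apply, B.d₃_ψ₃, LinearMap.comp_apply]⟩

lemma cohMapThree_surjective (B : BarComparison C) : Function.Surjective B.cohMapThree :=
  cohMap_surjective _ _ fun L hL => ⟨precomp B.φ₃ L, -(L.comp B.h₂), fun x => by
    have := congrArg L (B.barD_h₃ x)
    rw [hL, map_sub, map_sub] at this
    rw [precomp_apply, precomp_apply, LinearMap.neg_apply, LinearMap.comp_apply,
      eq_neg_iff_add_eq_zero, ← neg_eq_zero, this]
    abel⟩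

lemma hom_groupCohΛ_three_eq_zero (B : BarComparison C)
    (F : groupCohΛ π 3 →ₗ[(GroupRing π)ᵐᵒᵖ] GroupRing π) : F = 0 := by
  obtain ⟨x, hx⟩ := exists_eq_eval (F.comp B.cohMapThree)
  have hx₀ : x = 0 := C.d₃_injective <| (eq_zero_of_forall_dual fun y => by
    rw [← precomp_apply, ← hx, LinearMap.comp_apply, B.cohMapThree_precomp_d₃,
      map_zero]).trans (map_zero _).symm
  refine LinearMap.ext fun c => ?_
  obtain ⟨z, rfl⟩ := B.cohMapThree_surjective c
  rw [← LinearMap.comp_apply, hx, hx₀, map_zero, LinearMap.zero_apply]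

lemma subsingleton_extGroup (B : BarComparison C) :
    Subsingleton (extGroup (GroupRing π)ᵐᵒᵖ (groupCohΛ π 3) (GroupRing π) 1) := by
  have : Module.Projective (GroupRing π)ᵐᵒᵖ (C.P₃ →ₗ[GroupRing π] GroupRing π) :=
    projective_dual
  refine subsingleton_extGroup_one B.cohMapThree B.cohMapThree_surjective fun G => ?_
  let δ : (C.P₂ →ₗ[GroupRing π] GroupRing π) →ₗ[(GroupRing π)ᵐᵒᵖ] LinearMap.ker B.cohMapThree :=
    (precomp C.d₃).codRestrict _ B.cohMapThree_precomp_d₃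
  obtain ⟨x, hx⟩ := exists_eq_eval (G.comp δ)
  have hd₂ : C.d₂ x = 0 := Finsupp.ext fun v => by
    have h : δ (precomp C.d₂ (Finsupp.lapply v)) = 0 := Subtype.ext <| LinearMap.ext fun w => by
      change C.d₂ (C.d₃ w) v = 0
      rw [C.d₂_d₃]
      rfl
    have := hx (precomp C.d₂ (Finsupp.lapply v))
    rw [LinearMap.comp_apply, h, map_zero] at this
    exact this.symm
  obtain ⟨w, rfl⟩ := (C.exact x).1 hd₂
  let ρ : (C.P₃ →ₗ[GroupRing π] GroupRing π) →ₗ[(GroupRing π)ᵐᵒᵖ]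
    (C.P₃ →ₗ[GroupRing π] GroupRing π) := precomp (B.ψ₃.comp B.φ₃)
  let σ : (C.P₃ →ₗ[GroupRing π] GroupRing π) →ₗ[(GroupRing π)ᵐᵒᵖ]
    (C.P₃ →ₗ[GroupRing π] GroupRing π) := LinearMap.id - ρ
  have hσ : ∀ z, σ z ∈ LinearMap.ker B.cohMapThree :=
    fun z => (B.cohMapThree_eq_zero_iff _).2 ⟨z.comp (B.ψ₃.comp B.h₂), fun x => by
      have := congrArg (fun y => z (B.ψ₃ y)) (B.barD_h₃ x)
      simp only [B.ψ₃_barD, map_sub, map_zero] at this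
      exact (sub_eq_zero.1 this.symm)⟩
  let κ : (C.P₃ →ₗ[GroupRing π] GroupRing π) →ₗ[(GroupRing π)ᵐᵒᵖ] LinearMap.ker B.cohMapThree :=
    σ.codRestrict _ hσ
  let ev : (C.P₃ →ₗ[GroupRing π] GroupRing π) →ₗ[(GroupRing π)ᵐᵒᵖ] GroupRing π :=
    { toFun := fun z => z w
      map_add' := fun _ _ => rfl
      map_smul' := fun _ _ => rfl }
  refine ⟨G.comp κ + ev.comp ρ, fun k => ?_⟩
  obtain ⟨K, hK⟩ := (B.cohMapThree_eq_zero_iff _).1 k.2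
  have hk : k = κ k + δ (K.comp B.φ₂) := Subtype.ext <| LinearMap.ext fun y => by
    change k.1 y = (k.1 y - k.1 (B.ψ₃ (B.φ₃ y))) + K (B.φ₂ (C.d₃ y))
    rw [hK, B.barD_φ₃, sub_add_cancel]
  have hδ : G (δ (K.comp B.φ₂)) = k.1 (B.ψ₃ (B.φ₃ w)) := by
    rw [hK, B.barD_φ₃]
    exact hx _
  conv_rhs => rw [hk]
  rw [map_add, hδ]
  rfl

end BarComparison

end Cohomology

/-- Let `Γ` be a simplicial graph obtained from a single vertex by finitely
many operations of attaching a 1- or 2-simplex along a vertex, or a 2-simplex along an edge.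
Then the right-angled Artin group `π` defined by `Γ` has tame cohomology:
`Hom_Λ(H²(π; Λ), Λ) = 0`, `Hom_Λ(H³(π; Λ), Λ) = 0` and `Ext¹_Λ(H³(π; Λ), Λ) = 0`. -/
theorem statement7 (S : Finset ℕ) (Γ : SimpleGraph ℕ) (hbuilt : BuiltGraph S Γ) :
    (∀ f : groupCohΛ (RAAGroup ↑(↑S : Set ℕ) (Γ.induce ↑S)) 2
        →ₗ[(GroupRing (RAAGroup ↑(↑S : Set ℕ) (Γ.induce ↑S)))ᵐᵒᵖ]
        GroupRing (RAAGroup ↑(↑S : Set ℕ) (Γ.induce ↑S)), f = 0) ∧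
    (∀ f : groupCohΛ (RAAGroup ↑(↑S : Set ℕ) (Γ.induce ↑S)) 3
        →ₗ[(GroupRing (RAAGroup ↑(↑S : Set ℕ) (Γ.induce ↑S)))ᵐᵒᵖ]
        GroupRing (RAAGroup ↑(↑S : Set ℕ) (Γ.induce ↑S)), f = 0) ∧
    Subsingleton (extGroup (GroupRing (RAAGroup ↑(↑S : Set ℕ) (Γ.induce ↑S)))ᵐᵒᵖ
      (groupCohΛ (RAAGroup ↑(↑S : Set ℕ) (Γ.induce ↑S)) 3)
      (GroupRing (RAAGroup ↑(↑S : Set ℕ) (Γ.induce ↑S))) 1) := by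
  obtain ⟨g, hg⟩ := exists_isRAAGBasis S Γ
  obtain ⟨C⟩ := hbuilt.nonempty_salvettiComplex g hg.commute hg.hasDualCharacters
  obtain ⟨B⟩ := hg.nonempty_barComparison C
  exact ⟨B.hom_groupCohΛ_two_eq_zero, B.hom_groupCohΛ_three_eq_zero, B.subsingleton_extGroup⟩
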